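/- arXiv:math/0010234 — 3 statements merged into one kernel-verified Lean document; each statement's English description precedes it below -/
import Mathlib

section
/- For every infinite cardinal κ there exists a nondegenerate hereditarily indecomposable continuum H of weight at most κ such that every nondegenerate subcontinuum of H possesses an essential family of pairs of disjoint closed sets of cardinality κ. -/
open Set

/-- A space is *hereditarily indecomposable* if whenever two subcontinua
(nonempty compact connected subsets) intersect, one is contained in the other. -/
def HereditarilyIndecomposable (X : Type*) [TopologicalSpace X] : Prop :=
  ∀ C D : Set X, IsCompact C → IsConnected C → IsCompact D → IsConnected D →
    (C ∩ D).Nonempty → C ⊆ D ∨ D ⊆ C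

/-- `L` is a partition between `A` and `B`: a closed set whose complement is the
union of two disjoint open sets containing `A` and `B` respectively. -/
def IsPartitionBetween {X : Type*} [TopologicalSpace X] (L A B : Set X) : Prop :=
  IsClosed L ∧ ∃ U V : Set X, IsOpen U ∧ IsOpen V ∧ Disjoint U V ∧
    A ⊆ U ∧ B ⊆ V ∧ Lᶜ = U ∪ V

/-- A family of pairs of disjoint closed sets is *essential* if every choice of
partitions between the pairs has nonempty intersection. -/
def IsEssentialFamily {X : Type*} [TopologicalSpace X] {I : Type*} (A B : I → Set X) : Prop :=
  (∀ i, IsClosed (A i)) ∧ (∀ i, IsClosed (B i)) ∧ (∀ i, Disjoint (A i) (B i)) ∧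
    ∀ L : I → Set X, (∀ i, IsPartitionBetween (L i) (A i) (B i)) → (⋂ i, L i).Nonempty

/-- The weight of a topological space: the least cardinality of a base. -/
noncomputable def topWeight (X : Type*) [TopologicalSpace X] : Cardinal :=
  ⨅ B : {B : Set (Set X) // TopologicalSpace.IsTopologicalBasis B}, Cardinal.mk B.1

/-! On a compact space, a family of maps to `[0, 1]` which separates points and is closed under
truncated rational affine combinations separates disjoint closed sets. This allows strong properties
of the space to be expressed by equations between members of the family.

* Suppose every member factors as `zigzag ∘ z` with another member `z`. If `C` and `D` are
  subcontinua with `a ∈ C \ D` and `b ∈ D \ C`, take a member with values `0` at `a`, `1` at `b`,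
  less than `2 / 3` on `C` and greater than `1 / 3` on `D`. Its factor `z` also climbs from `0` to
  `1`, but omits `1 / 3` on `C` and `2 / 3` on `D`, so `C` and `D` cannot meet.
* Suppose every member `f` has associated members `y i` such that, given finitely many members
  `g i`, the equations `pinch (g i) (y i) = 1 / 2` hold simultaneously somewhere between `{f = 0}`
  and `{f = 1}`. Partitions between the sets `{y i ≤ 1 / 4}` and `{3 / 4 ≤ y i}` then have a common
  point, for otherwise suitable `g i` would contradict this. The same holds on every subcontinuum on
  which `f` takes both values.

The space is built from formal terms: its points are the valuations of the terms in `[0, 1]` which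
obey the required equations. These are closed conditions, so the space is compact, and only finitely
many of them have to be solved at a time, together with a pinching equation which shows that the
space is not totally disconnected. A nondegenerate component is then the continuum. To decouple the
finitely many pinching conditions, they are imposed over disjoint windows of values of `f`. In the
resulting system the equation belonging to an unknown has opposite signs on the faces of the cube
where that unknown is `0` and `1`, so the Poincaré–Miranda theorem provides a solution.

The underlying theorem of Brouwer is proved following Milnor and Rogers: if `r` retracts a ball onto
its boundary sphere, then `x ↦ x + t • (r x - x)` maps the ball onto itself for small `t`, so the
integral of its Jacobian, a polynomial in `t`, is the volume of the ball; but at `t = 1` the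
Jacobian vanishes. -/

section Brouwer

open Metric MeasureTheory Polynomial
open scoped NNReal Topology

theorem exists_polynomial_eval_eq_integral {α : Type*} [MeasurableSpace α] {μ : Measure α}
    {P : α → ℝ[X]} {n : ℕ} (hdeg : ∀ a, (P a).natDegree ≤ n)
    (hint : ∀ t, Integrable (fun a ↦ (P a).eval t) μ) :
    ∃ Q : ℝ[X], ∀ t, Q.eval t = ∫ a, (P a).eval t ∂μ := by
  let nodes := Finset.range (n + 1)
  let b : ℕ → ℝ[X] := Lagrange.basis nodes Nat.cast
  have hP : ∀ a, P a = ∑ j ∈ nodes, C ((P a).eval (j : ℝ)) * b j := fun a ↦ by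
    rw [← Lagrange.interpolate_apply]
    refine Lagrange.eq_interpolate Nat.cast_injective.injOn
      (degree_le_natDegree.trans_lt (Nat.cast_lt.2 ?_))
    simpa only [nodes, Finset.card_range] using Nat.lt_succ_of_le (hdeg a)
  refine ⟨∑ j ∈ nodes, C (∫ a, (P a).eval (j : ℝ) ∂μ) * b j, fun t ↦ ?_⟩
  calc eval t (∑ j ∈ nodes, C (∫ a, (P a).eval (j : ℝ) ∂μ) * b j)
      = ∑ j ∈ nodes, ∫ a, (P a).eval (j : ℝ) * (b j).eval t ∂μ := by
        simp only [eval_finsetSum, eval_mul, eval_C, integral_mul_const]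
    _ = ∫ a, ∑ j ∈ nodes, (P a).eval (j : ℝ) * (b j).eval t ∂μ :=
        (integral_finsetSum nodes fun j _ ↦ (hint j).mul_const ((b j).eval t)).symm
    _ = ∫ a, (P a).eval t ∂μ := by
        congr 1 with a
        conv_rhs => rw [hP a]
        simp only [eval_finsetSum, eval_mul, eval_C]

theorem exists_polynomial_eval_eq_det {E : Type*} [NormedAddCommGroup E] [NormedSpace ℝ E]
    [FiniteDimensional ℝ E] (A : E →L[ℝ] E) :
    ∃ P : ℝ[X], P.natDegree ≤ Module.finrank ℝ E ∧ ∀ t, P.eval t = (1 + t • A).det := by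
  let b := Module.finBasis ℝ E
  let M := LinearMap.toMatrix b b A
  refine ⟨((X : ℝ[X]) • M.map C + (1 : Matrix _ _ ℝ).map C).det, ?_, fun t ↦ ?_⟩
  · simpa only [Fintype.card_fin] using natDegree_det_X_add_C_le M 1
  · have hM : LinearMap.toMatrix b b (1 + t • A : E →L[ℝ] E) = 1 + t • M := by
      rw [ContinuousLinearMap.toLinearMap_add, ContinuousLinearMap.toLinearMap_smul, map_add,
        map_smul]
      simp only [M, ContinuousLinearMap.toLinearMap_one, LinearMap.toMatrix_one]
    rw [ContinuousLinearMap.det, ← LinearMap.det_toMatrix b, hM, ← coe_evalRingHom,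
      RingHom.map_det]
    congr 1
    ext i j
    by_cases hij : i = j <;> simp [hij, add_comm, mul_comm t]

theorem det_one_add_pos {E : Type*} [NormedAddCommGroup E] [NormedSpace ℝ E]
    [FiniteDimensional ℝ E] {A : E →L[ℝ] E} (hA : ‖A‖ < 1) : 0 < (1 + A).det := by
  have : CompleteSpace E := FiniteDimensional.complete ℝ E
  have hne : ∀ s ∈ Icc (0 : ℝ) 1, (1 + s • A).det ≠ 0 := by
    intro s hs
    have hsA : ‖-(s • A)‖ < 1 := by
      rw [norm_neg, norm_smul, Real.norm_of_nonneg hs.1]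
      exact (mul_le_of_le_one_left (norm_nonneg A) hs.2).trans_lt hA
    have hunit : IsUnit (1 + s • A) := by simpa using isUnit_one_sub_of_norm_lt_one hsA
    exact (LinearMap.isUnit_det _ (hunit.map ContinuousLinearMap.toLinearMapRingHom)).ne_zero
  have hcont : Continuous fun s : ℝ ↦ (1 + s • A).det :=
    ContinuousLinearMap.continuous_det.comp (by fun_prop)
  by_contra! hneg
  have hsign : (0 : ℝ) ∈ Icc ((1 + (1 : ℝ) • A).det) ((1 + (0 : ℝ) • A).det) := by
    simpa [ContinuousLinearMap.det] using hneg
  obtain ⟨s, hs, hs0⟩ := intermediate_value_Icc' zero_le_one hcont.continuousOn hsign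
  exact hne s hs hs0

theorem approximatesLinearOn_id_add {E : Type*} [NormedAddCommGroup E] [NormedSpace ℝ E]
    {g : E → E} {s : Set E} {c : ℝ≥0} (hg : LipschitzOnWith c g s) :
    ApproximatesLinearOn (fun x ↦ x + g x) (ContinuousLinearEquiv.refl ℝ E : E →L[ℝ] E) s c := by
  rw [ApproximatesLinearOn.approximatesLinearOn_iff_lipschitzOnWith]
  convert hg using 1
  ext x
  simp

theorem subsingleton_or_lt_inv_nnnorm_refl {E : Type*} [NormedAddCommGroup E] [NormedSpace ℝ E]
    {c : ℝ≥0} (hc : c < 1) : Subsingleton E ∨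
      c < ‖((ContinuousLinearEquiv.refl ℝ E).symm : E →L[ℝ] E)‖₊⁻¹ := by
  rcases subsingleton_or_nontrivial E with hE | hE
  · exact .inl hE
  · right
    rw [ContinuousLinearEquiv.refl_symm, ContinuousLinearEquiv.coe_refl,
      ContinuousLinearMap.nnnorm_id, inv_one]
    exact hc

theorem injOn_id_add {E : Type*} [NormedAddCommGroup E] [NormedSpace ℝ E]
    {g : E → E} {s : Set E} {c : ℝ≥0} (hg : LipschitzOnWith c g s) (hc : c < 1) :
    InjOn (fun x ↦ x + g x) s :=
  (approximatesLinearOn_id_add hg).injOn (subsingleton_or_lt_inv_nnnorm_refl hc)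

theorem isOpen_image_id_add {E : Type*} [NormedAddCommGroup E] [NormedSpace ℝ E] [CompleteSpace E]
    {g : E → E} {s : Set E} {c : ℝ≥0} (hs : IsOpen s) (hg : LipschitzOnWith c g s) (hc : c < 1) :
    IsOpen ((fun x ↦ x + g x) '' s) :=
  (approximatesLinearOn_id_add hg).open_image
    (ContinuousLinearEquiv.refl ℝ E).toNonlinearRightInverse hs
    (subsingleton_or_lt_inv_nnnorm_refl hc)

theorem image_eq_of_isOpen_image {X : Type*} [TopologicalSpace X] [T2Space X] {s : Set X}
    {f : X → X} (hs : IsPreconnected s) (hc : IsCompact (closure s))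
    (hf : ContinuousOn f (closure s)) (hopen : IsOpen (f '' s)) (hmaps : MapsTo f s s)
    (hfr : ∀ x ∈ closure s, f x ∈ s → x ∈ s) : f '' s = s := by
  rcases s.eq_empty_or_nonempty with rfl | ⟨x₀, hx₀⟩
  · exact image_empty f
  refine hmaps.image_subset.antisymm (hs.subset_of_closure_inter_subset hopen
    ⟨f x₀, hmaps hx₀, mem_image_of_mem f hx₀⟩ ?_)
  rintro y ⟨hy, hys⟩
  have hcl : closure (f '' s) ⊆ f '' closure s :=
    closure_minimal (image_mono subset_closure) (hc.image_of_continuousOn hf).isClosed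
  obtain ⟨x, hx, rfl⟩ := hcl hy
  exact mem_image_of_mem f (hfr x hx hys)

theorem integral_det_one_add_fderiv {E : Type*} [NormedAddCommGroup E] [NormedSpace ℝ E]
    [FiniteDimensional ℝ E] [MeasurableSpace E] [BorelSpace E] (μ : Measure E)
    [μ.IsAddHaarMeasure] {g : E → E} {s : Set E} {c : ℝ≥0} (hs : IsOpen s)
    (hg : DifferentiableOn ℝ g s) (hlip : LipschitzOnWith c g s) (hc : c < 1)
    (himage : (fun x ↦ x + g x) '' s = s) :
    ∫ x in s, (1 + fderiv ℝ g x).det ∂μ = μ.real s := by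
  have hpos : ∀ x ∈ s, 0 < (1 + fderiv ℝ g x).det := fun x hx ↦ det_one_add_pos <|
    (norm_fderiv_le_of_lipschitzOn ℝ (hs.mem_nhds hx) hlip).trans_lt (mod_cast hc)
  have hderiv : ∀ x ∈ s, HasFDerivWithinAt (fun x ↦ x + g x) (1 + fderiv ℝ g x) s x :=
    fun x hx ↦ ((hasFDerivAt_id x).add
      (hg.differentiableAt (hs.mem_nhds hx)).hasFDerivAt).hasFDerivWithinAt
  calc ∫ x in s, (1 + fderiv ℝ g x).det ∂μ
      = ∫ x in s, |(1 + fderiv ℝ g x).det| • (1 : ℝ) ∂μ :=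
        setIntegral_congr_fun hs.measurableSet fun x hx ↦ by
          rw [abs_of_pos (hpos x hx), smul_eq_mul, mul_one]
    _ = ∫ _ in (fun x ↦ x + g x) '' s, (1 : ℝ) ∂μ :=
        (integral_image_eq_integral_abs_det_fderiv_smul μ hs.measurableSet hderiv
          (injOn_id_add hlip hc) fun _ ↦ 1).symm
    _ = μ.real s := by rw [himage, setIntegral_const, smul_eq_mul, mul_one]

theorem det_eq_zero_of_eventually_norm_eq {E : Type*} [NormedAddCommGroup E]
    [InnerProductSpace ℝ E] [FiniteDimensional ℝ E] {r : E → E} {r' : E →L[ℝ] E} {x : E} {R : ℝ}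
    (hr : HasFDerivAt r r' x) (hnorm : ∀ᶠ y in 𝓝 x, ‖r y‖ = R) (hR : R ≠ 0) : r'.det = 0 := by
  by_contra hdet
  have hsurj : LinearMap.range (r' : E →ₗ[ℝ] E) = ⊤ := (LinearMap.isUnit_iff_range_eq_top _).1
    ((LinearMap.isUnit_iff_isUnit_det _).2 (isUnit_iff_ne_zero.2 hdet))
  obtain ⟨w, hw⟩ : ∃ w, r' w = r x := LinearMap.range_eq_top.1 hsurj (r x)
  have hconst : HasFDerivAt (fun y ↦ ‖r y‖ ^ 2) (0 : E →L[ℝ] ℝ) x :=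
    (hasFDerivAt_const (R ^ 2) x).congr_of_eventuallyEq (hnorm.mono fun y hy ↦ by simp only [hy])
  have hzero := congrArg (fun T : E →L[ℝ] ℝ ↦ T w) (hr.norm_sq.unique hconst)
  simp [hw, hnorm.self_of_nhds, hR] at hzero

section Retraction

variable {E : Type*} [NormedAddCommGroup E] [NormedSpace ℝ E] [FiniteDimensional ℝ E]
  {r : E → E} {R t : ℝ} {K : ℝ≥0}

theorem image_ball_eq_of_retraction (hR : 0 < R) (hr : Continuous r)
    (hnorm : ∀ x ∈ ball (0 : E) R, ‖r x‖ ≤ R) (hfix : ∀ x ∈ sphere (0 : E) R, r x = x)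
    (hlip : LipschitzOnWith K (fun x ↦ t • (r x - x)) (ball 0 R)) (hK : K < 1)
    (ht : t ∈ Ico 0 1) : (fun x ↦ x + t • (r x - x)) '' ball 0 R = ball 0 R := by
  have : ProperSpace E := FiniteDimensional.proper_real E
  have : CompleteSpace E := FiniteDimensional.complete ℝ E
  refine image_eq_of_isOpen_image (convex_ball 0 R).isPreconnected ?_ (by fun_prop)
    (isOpen_image_id_add isOpen_ball hlip hK) (fun x hx ↦ ?_) fun x hx hfx ↦ ?_
  · exact (isCompact_closedBall 0 R).closure_of_subset ball_subset_closedBall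
  · rw [mem_ball_zero_iff] at hx ⊢
    calc ‖x + t • (r x - x)‖ = ‖(1 - t) • x + t • r x‖ := by congr 1; module
      _ ≤ (1 - t) * ‖x‖ + t * ‖r x‖ := by
        refine (norm_add_le _ _).trans_eq ?_
        rw [norm_smul, norm_smul, Real.norm_of_nonneg ht.1,
          Real.norm_of_nonneg (sub_nonneg.2 ht.2.le)]
      _ ≤ (1 - t) * ‖x‖ + t * R := by
        gcongr
        exacts [ht.1, hnorm x (mem_ball_zero_iff.2 hx)]
      _ < R := by nlinarith [mul_pos (sub_pos.2 ht.2) (sub_pos.2 hx)]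
  · rw [closure_ball _ hR.ne'] at hx
    by_contra hball
    have hsphere : x ∈ sphere (0 : E) R := by
      rw [← closedBall_sdiff_ball]
      exact ⟨hx, hball⟩
    simp only [hfix x hsphere, sub_self, smul_zero, add_zero] at hfx
    exact hball hfx

theorem integral_det_one_add_smul_fderiv_of_retraction [MeasurableSpace E] [BorelSpace E]
    (μ : Measure E) [μ.IsAddHaarMeasure] (hR : 0 < R) (hr : Differentiable ℝ r)
    (hnorm : ∀ x ∈ ball (0 : E) R, ‖r x‖ ≤ R) (hfix : ∀ x ∈ sphere (0 : E) R, r x = x)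
    (hlip : LipschitzOnWith K (fun x ↦ r x - x) (ball 0 R)) (ht : t ∈ Ioo 0 (1 / (K + 1 : ℝ))) :
    ∫ x in ball 0 R, (1 + t • fderiv ℝ (fun x ↦ r x - x) x).det ∂μ = μ.real (ball 0 R) := by
  obtain ⟨ht0, htK⟩ := ht
  rw [lt_div_iff₀ (by positivity)] at htK
  have hg : Differentiable ℝ fun x ↦ r x - x := hr.sub differentiable_id
  have hlip' : LipschitzOnWith (t.toNNReal * K) (fun x ↦ t • (r x - x)) (ball 0 R) := by
    refine .of_dist_le_mul fun x hx y hy ↦ ?_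
    rw [dist_smul₀, Real.norm_of_nonneg ht0.le, NNReal.coe_mul, Real.coe_toNNReal t ht0.le,
      mul_assoc]
    gcongr
    exact hlip.dist_le_mul x hx y hy
  have hlt : t.toNNReal * K < 1 := by
    rw [← NNReal.coe_lt_coe, NNReal.coe_mul, Real.coe_toNNReal t ht0.le, NNReal.coe_one]
    linarith
  have himage := image_ball_eq_of_retraction hR hr.continuous hnorm hfix hlip' hlt
    ⟨ht0.le, by nlinarith [K.coe_nonneg]⟩
  rw [← integral_det_one_add_fderiv μ isOpen_ball (hg.const_smul t).differentiableOn hlip' hlt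
    himage]
  simp only [fderiv_const_smul (hg _)]

end Retraction

theorem exists_mem_sphere_ne_of_norm_eq {E : Type*} [NormedAddCommGroup E] [InnerProductSpace ℝ E]
    [FiniteDimensional ℝ E] {r : E → E} {R : ℝ} (hR : 0 < R) (hr : ContDiff ℝ 1 r)
    (hnorm : ∀ x ∈ ball (0 : E) R, ‖r x‖ = R) : ∃ x ∈ sphere (0 : E) R, r x ≠ x := by
  borelize E
  by_contra! hfix
  let g := fun x ↦ r x - x
  have hg : ContDiff ℝ 1 g := hr.sub contDiff_id
  obtain ⟨K, hK⟩ : ∃ K, LipschitzOnWith K g (closedBall 0 R) :=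
    LocallyLipschitzOn.exists_lipschitzOnWith_of_compact (isCompact_closedBall 0 R)
      (hg.locallyLipschitz (𝕂 := ℝ)).locallyLipschitzOn
  choose P hPdeg hP using fun x ↦ exists_polynomial_eval_eq_det (fderiv ℝ g x)
  obtain ⟨Q, hQ⟩ := exists_polynomial_eval_eq_integral (μ := volume.restrict (ball (0 : E) R))
    hPdeg fun t ↦ by
      have hcont : Continuous fun x ↦ (1 + t • fderiv ℝ g x).det :=
        ContinuousLinearMap.continuous_det.comp
          (continuous_const.add ((hg.continuous_fderiv one_ne_zero).const_smul t))
      simp only [hP]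
      exact (hcont.continuousOn.integrableOn_compact (isCompact_closedBall 0 R)).mono_set
        ball_subset_closedBall
  have hQconst : Q = C (volume.real (ball (0 : E) R)) := by
    refine eq_of_infinite_eval_eq _ _
      ((Ioo_infinite (b := 1 / (K + 1 : ℝ)) (by positivity)).mono fun t ht ↦ ?_)
    rw [mem_ofPred_eq, eval_C, hQ]
    simp only [hP]
    exact integral_det_one_add_smul_fderiv_of_retraction volume hR (hr.differentiable one_ne_zero)
      (fun x hx ↦ (hnorm x hx).le) hfix (hK.mono ball_subset_closedBall) ht
  have hzero : Q.eval 1 = 0 := by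
    rw [hQ, setIntegral_congr_fun (g := fun _ ↦ (0 : ℝ)) measurableSet_ball fun x hx ↦ ?_,
      integral_zero]
    have hderiv : HasFDerivAt r (1 + fderiv ℝ g x) x := by
      have hsum := (hasFDerivAt_id x).add (hg.differentiable one_ne_zero x).hasFDerivAt
      exact hsum.congr_of_eventuallyEq (.of_forall fun y ↦ (add_sub_cancel y (r y)).symm)
    simp only [hP, one_smul]
    exact det_eq_zero_of_eventually_norm_eq hderiv
      (Filter.eventually_of_mem (isOpen_ball.mem_nhds hx) hnorm) hR.ne'
  rw [hQconst, eval_C] at hzero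
  exact (ENNReal.toReal_pos (measure_ball_pos _ _ hR).ne' measure_ball_lt_top.ne).ne' hzero

theorem exists_isFixedPt_of_contDiff {E : Type*} [NormedAddCommGroup E] [InnerProductSpace ℝ E]
    [FiniteDimensional ℝ E] {f : E → E} {R : ℝ} (hR : 0 < R) (hf : ContDiff ℝ 1 f)
    (hbound : ∀ x, ‖f x‖ ≤ R) : ∃ x, Function.IsFixedPt f x := by
  by_contra! hfix
  let φ : ContDiffBump (0 : E) := ⟨R, R + 1, hR, lt_add_one R⟩
  let w : E → E := fun x ↦ x - φ x • f x
  have hw : ∀ x, w x ≠ 0 := by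
    intro x hx
    have hxR : ‖x‖ ≤ R := by
      rw [sub_eq_zero.1 hx, norm_smul, Real.norm_of_nonneg φ.nonneg]
      exact (mul_le_of_le_one_left (norm_nonneg _) φ.le_one).trans (hbound x)
    rw [sub_eq_zero, φ.one_of_mem_closedBall (mem_closedBall_zero_iff.2 hxR), one_smul] at hx
    exact hfix x hx.symm
  have hwd : ContDiff ℝ 1 w := contDiff_id.sub (φ.contDiff.smul hf)
  obtain ⟨x, hx, hrx⟩ := exists_mem_sphere_ne_of_norm_eq (r := fun x ↦ ((R + 1) / ‖w x‖) • w x)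
    (by positivity : 0 < R + 1)
    ((contDiff_const.div (hwd.norm ℝ hw) fun x ↦ norm_ne_zero_iff.2 (hw x)).smul hwd)
    fun x _ ↦ by
      rw [norm_smul, Real.norm_of_nonneg (by positivity),
        div_mul_cancel₀ _ (norm_ne_zero_iff.2 (hw x))]
  have hwx : w x = x := by
    simp only [w, φ.zero_of_le_dist (mem_sphere.1 hx).ge, zero_smul, sub_zero]
  refine hrx ?_
  rw [hwx, mem_sphere_zero_iff_norm.1 hx, div_self (by positivity), one_smul]

theorem exists_isFixedPt_of_norm_le {E : Type*} [NormedAddCommGroup E] [InnerProductSpace ℝ E]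
    [FiniteDimensional ℝ E] {f : E → E} {R : ℝ} (hf : Continuous f) (hbound : ∀ x, ‖f x‖ ≤ R) :
    ∃ x, Function.IsFixedPt f x := by
  have : ProperSpace E := FiniteDimensional.proper_real E
  have hR : 0 ≤ R := (norm_nonneg _).trans (hbound 0)
  obtain ⟨x₀, -, hmin⟩ := (isCompact_closedBall (0 : E) (R + 1)).exists_isMinOn
    (nonempty_closedBall.2 (by positivity)) (f := fun x ↦ ‖f x - x‖) (by fun_prop)
  refine ⟨x₀, ?_⟩
  by_contra hx₀
  have hpos : 0 < min 1 ‖f x₀ - x₀‖ := lt_min one_pos (norm_sub_pos_iff.2 hx₀)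
  obtain ⟨g, hg, hgf⟩ := hf.exists_contDiff_approx 1
    (ε := fun _ ↦ min 1 ‖f x₀ - x₀‖) continuous_const fun _ ↦ hpos
  have hgf1 : ∀ x, ‖g x‖ ≤ R + 1 := fun x ↦ by
    have h1 := (hgf.1 x).le.trans (min_le_left _ _)
    rw [dist_eq_norm] at h1
    linarith [norm_sub_norm_le (g x) (f x), hbound x]
  obtain ⟨x, hx⟩ := exists_isFixedPt_of_contDiff (by positivity) hg hgf1
  have hxR : x ∈ closedBall 0 (R + 1) := by
    rw [mem_closedBall_zero_iff, ← hx]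
    exact hgf1 x
  have h2 := (hgf.1 x).trans_le (min_le_right _ _)
  rw [hx, dist_comm, dist_eq_norm] at h2
  exact (hmin hxR).not_gt h2

theorem exists_isFixedPt_of_isBounded_range {E : Type*} [NormedAddCommGroup E] [NormedSpace ℝ E]
    [FiniteDimensional ℝ E] {f : E → E} (hf : Continuous f)
    (hbound : Bornology.IsBounded (range f)) : ∃ x, Function.IsFixedPt f x := by
  let e : E ≃L[ℝ] EuclideanSpace ℝ (Fin (Module.finrank ℝ E)) := toEuclidean
  obtain ⟨R, hR⟩ := isBounded_iff_forall_norm_le.1 (e.lipschitz.isBounded_image hbound)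
  obtain ⟨x, hx⟩ := exists_isFixedPt_of_norm_le (f := e ∘ f ∘ e.symm) (by fun_prop)
    fun x ↦ hR _ (mem_image_of_mem e (mem_range_self _))
  exact ⟨e.symm x, (e.eq_symm_apply).2 hx⟩

end Brouwer

open scoped unitInterval Topology

section PoincareMiranda

variable {ι : Type*}

theorem exists_isFixedPt_unitInterval_cube [Finite ι] {f : (ι → I) → ι → I} (hf : Continuous f) :
    ∃ x, Function.IsFixedPt f x := by
  have := Fintype.ofFinite ι
  let proj : (ι → ℝ) → ι → I := fun x i ↦ projIcc 0 1 zero_le_one (x i)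
  have hproj : Continuous proj :=
    continuous_pi fun i ↦ continuous_projIcc.comp (continuous_apply i)
  let incl : (ι → I) → ι → ℝ := fun x i ↦ x i
  have hincl : Continuous incl := by fun_prop
  have hbound : Bornology.IsBounded (range (incl ∘ f ∘ proj)) :=
    (isCompact_range hincl).isBounded.subset (range_comp_subset_range _ _)
  obtain ⟨x, hx⟩ := exists_isFixedPt_of_isBounded_range (hincl.comp (hf.comp hproj)) hbound
  have hleft : ∀ y, proj (incl y) = y := fun y ↦ funext fun i ↦ projIcc_val zero_le_one (y i)
  exact ⟨proj x, (hleft _).symm.trans (congrArg proj hx)⟩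

/-- The Poincaré–Miranda theorem. -/
theorem exists_forall_eq_zero_of_nonpos_of_nonneg_of_finite [Finite ι]
    {h : ι → (ι → I) → ℝ} (hc : ∀ i, Continuous (h i))
    (hzero : ∀ i x, x i = 0 → h i x ≤ 0) (hone : ∀ i x, x i = 1 → 0 ≤ h i x) :
    ∃ x, ∀ i, h i x = 0 := by
  let f : (ι → I) → ι → I := fun x i ↦ projIcc 0 1 zero_le_one (x i - h i x)
  have hf : Continuous f := continuous_pi fun i ↦ continuous_projIcc.comp
    ((continuous_subtype_val.comp (continuous_apply i)).sub (hc i))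
  obtain ⟨x, hx⟩ := exists_isFixedPt_unitInterval_cube hf
  refine ⟨x, fun i ↦ ?_⟩
  have hxi : projIcc 0 1 zero_le_one (x i - h i x) = x i := congrFun hx i
  rcases le_or_gt (x i - h i x : ℝ) 0 with hle | hpos
  · have hx0 : x i = 0 := by rw [← hxi, projIcc_of_le_left _ hle]; rfl
    rw [hx0, Icc.coe_zero] at hle
    linarith [hzero i x hx0]
  rcases le_or_gt 1 (x i - h i x : ℝ) with hge | hlt
  · have hx1 : x i = 1 := by rw [← hxi, projIcc_of_right_le _ hge]; rfl
    rw [hx1, Icc.coe_one] at hge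
    linarith [hone i x hx1]
  · rw [projIcc_of_mem zero_le_one ⟨hpos.le, hlt.le⟩] at hxi
    simpa using congrArg Subtype.val hxi

theorem exists_forall_eq_zero_of_nonpos_of_nonneg {h : ι → (ι → I) → ℝ} (hc : ∀ i, Continuous (h i))
    (hzero : ∀ i x, x i = 0 → h i x ≤ 0) (hone : ∀ i x, x i = 1 → 0 ≤ h i x) :
    ∃ x, ∀ i, h i x = 0 := by
  classical
  let Z : Finset ι → Set (ι → I) := fun s ↦ {x | ∀ i ∈ s, h i x = 0}
  have hclosed : ∀ s, IsClosed (Z s) := fun s ↦ by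
    simp only [Z, ofPred_forall]
    exact isClosed_biInter fun i _ ↦ isClosed_eq (hc i) continuous_const
  have hnonempty : ∀ s, (Z s).Nonempty := fun s ↦ by
    let extend : (s → I) → ι → I := fun y i ↦ if hi : i ∈ s then y ⟨i, hi⟩ else 0
    have hext : Continuous extend := continuous_pi fun i ↦ by
      by_cases hi : i ∈ s <;> simp only [extend, hi, dite_true, dite_false] <;> fun_prop
    obtain ⟨y, hy⟩ := exists_forall_eq_zero_of_nonpos_of_nonneg_of_finite
      (h := fun (i : s) y ↦ h i (extend y)) (fun i ↦ (hc i).comp hext)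
      (fun i y hyi ↦ hzero i _ (by simpa [extend] using hyi))
      (fun i y hyi ↦ hone i _ (by simpa [extend] using hyi))
    exact ⟨extend y, fun i hi ↦ hy ⟨i, hi⟩⟩
  obtain ⟨x, hx⟩ := IsCompact.nonempty_iInter_of_directed_nonempty_isCompact_isClosed Z
    (directed_of_isDirected_le fun s t (hst : s ⊆ t) x hx i hi ↦ hx i (hst hi)) hnonempty
    (fun s ↦ (hclosed s).isCompact) hclosed
  exact ⟨x, fun i ↦ mem_iInter.1 hx {i} i (Finset.mem_singleton_self i)⟩

end PoincareMiranda

section ContinuumCriteria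

variable {X : Type*} [TopologicalSpace X]

theorem hereditarilyIndecomposable_of_forall_exists_continuous [T2Space X]
    (h : ∀ (C D : Set X) (a b : X), IsClosed C → IsClosed D → a ∈ C \ D → b ∈ D \ C →
      ∃ z : X → ℝ, Continuous z ∧ z a ≤ 1 / 3 ∧ 2 / 3 ≤ z b ∧
        (∀ x ∈ C, z x ≠ 1 / 3) ∧ ∀ x ∈ D, z x ≠ 2 / 3) :
    HereditarilyIndecomposable X := by
  rintro C D hC hCconn hD hDconn ⟨c, hcC, hcD⟩
  by_contra! hsub
  obtain ⟨a, ha⟩ := sdiff_nonempty.2 hsub.1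
  obtain ⟨b, hb⟩ := sdiff_nonempty.2 hsub.2
  obtain ⟨z, hz, hza, hzb, hzC, hzD⟩ := h C D a b hC.isClosed hD.isClosed ha hb
  have hlt : z c < 1 / 3 := by
    by_contra! hge
    obtain ⟨x, hx, hzx⟩ :=
      hCconn.isPreconnected.intermediate_value ha.1 hcC hz.continuousOn ⟨hza, hge⟩
    exact hzC x hx hzx
  obtain ⟨x, hx, hzx⟩ := hDconn.isPreconnected.intermediate_value hcD hb.1 hz.continuousOn
    ⟨hlt.le.trans (by norm_num), hzb⟩
  exact hzD x hx hzx

theorem exists_closed_cover_of_iInter_partitions_eq_empty [NormalSpace X] {ι : Type*} [Finite ι]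
    {A B L : ι → Set X} (hA : ∀ i, IsClosed (A i)) (hB : ∀ i, IsClosed (B i))
    (hL : ∀ i, IsPartitionBetween (L i) (A i) (B i)) (hempty : ⋂ i, L i = ∅) :
    ∃ C D : ι → Set X, (∀ i, IsClosed (C i)) ∧ (∀ i, IsClosed (D i)) ∧
      (∀ i, Disjoint (C i) (D i)) ∧ (∀ i, A i ⊆ C i) ∧ (∀ i, B i ⊆ D i) ∧
      ⋃ i, (C i ∪ D i) = univ := by
  choose U V hU hV hUV hAU hBV hLUV using fun i ↦ (hL i).2
  have hcover : univ ⊆ ⋃ i, (U i ∪ V i) := by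
    simp only [← hLUV, ← compl_iInter, hempty, compl_empty, subset_refl]
  obtain ⟨W, hWcover, hW, hWsub⟩ := exists_subset_iUnion_closed_subset isClosed_univ
    (fun i ↦ (hU i).union (hV i)) (fun x _ ↦ toFinite _) hcover
  have hCU : ∀ i, W i \ V i ∪ A i ⊆ U i := fun i ↦
    union_subset (fun x hx ↦ (hWsub i hx.1).resolve_right hx.2) (hAU i)
  have hDV : ∀ i, W i \ U i ∪ B i ⊆ V i := fun i ↦
    union_subset (fun x hx ↦ (hWsub i hx.1).resolve_left hx.2) (hBV i)
  refine ⟨fun i ↦ W i \ V i ∪ A i, fun i ↦ W i \ U i ∪ B i,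
    fun i ↦ ((hW i).sdiff (hV i)).union (hA i), fun i ↦ ((hW i).sdiff (hU i)).union (hB i),
    fun i ↦ (hUV i).mono (hCU i) (hDV i), fun i ↦ subset_union_right,
    fun i ↦ subset_union_right,
    eq_univ_of_univ_subset (hWcover.trans (iUnion_mono fun i x hx ↦ ?_))⟩
  by_cases hxV : x ∈ V i
  · exact .inr (.inl ⟨hx, (hUV i).notMem_of_mem_right hxV⟩)
  · exact .inl (.inl ⟨hx, hxV⟩)

theorem isEssentialFamily_of_forall_finset_iUnion_ne_univ [CompactSpace X] [NormalSpace X]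
    {ι : Type*} {A B : ι → Set X} (hA : ∀ i, IsClosed (A i)) (hB : ∀ i, IsClosed (B i))
    (hAB : ∀ i, Disjoint (A i) (B i))
    (h : ∀ (s : Finset ι) (C D : s → Set X), (∀ i, IsClosed (C i)) → (∀ i, IsClosed (D i)) →
      (∀ i, Disjoint (C i) (D i)) → (∀ i : s, A i ⊆ C i) → (∀ i : s, B i ⊆ D i) →
      ⋃ i, (C i ∪ D i) ≠ univ) : IsEssentialFamily A B := by
  refine ⟨hA, hB, hAB, fun L hL ↦ nonempty_iff_ne_empty.2 fun hempty ↦ ?_⟩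
  obtain ⟨s, hs⟩ := isCompact_univ.elim_finite_subfamily_closed L (fun i ↦ (hL i).1)
    (by rw [hempty, inter_empty])
  rw [univ_inter] at hs
  obtain ⟨C, D, hC, hD, hCD, hAC, hBD, hcover⟩ :=
    exists_closed_cover_of_iInter_partitions_eq_empty (L := fun i : s ↦ L i)
      (fun i ↦ hA i) (fun i ↦ hB i) (fun i ↦ hL i) (by rwa [iInter_subtype])
  exact h s C D hC hD hCD hAC hBD hcover

end ContinuumCriteria

noncomputable section Truncation

/-- Truncation of a real number to the unit interval. -/
def clamp (r : ℝ) : I := projIcc 0 1 zero_le_one r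

theorem clamp_eq_zero {r : ℝ} : clamp r = 0 ↔ r ≤ 0 := projIcc_eq_left zero_lt_one

theorem clamp_eq_one {r : ℝ} : clamp r = 1 ↔ 1 ≤ r := projIcc_eq_right zero_lt_one

theorem coe_clamp_of_mem {r : ℝ} (hr : r ∈ Icc 0 1) : (clamp r : ℝ) = r :=
  congrArg Subtype.val (projIcc_of_mem zero_le_one hr)

@[fun_prop]
theorem continuous_clamp : Continuous clamp := continuous_projIcc (h := zero_le_one)

/-- Truncation of `g` to the interval `[2 * y - 1, 2 * y]`. It is a deformation of `g` to `y` on the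
boundary `y ∈ {0, 1}` of the unit interval, so equations `pinch g y = 1 / 2` with unknown `y` are
solvable by the Poincaré–Miranda theorem, and they force `y = 3 / 4` where `g = 0` and `y = 1 / 4`
where `g = 1`. -/
def pinch (g y : ℝ) : ℝ := max (min g (2 * y)) (2 * y - 1)

@[fun_prop]
theorem continuous_pinch {X : Type*} [TopologicalSpace X] {f g : X → ℝ} (hf : Continuous f)
    (hg : Continuous g) : Continuous fun x ↦ pinch (f x) (g x) := by
  unfold pinch
  fun_prop

theorem pinch_zero_right {g : ℝ} (hg : 0 ≤ g) : pinch g 0 = 0 := by grind [pinch]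

theorem pinch_one_right {g : ℝ} (hg : g ≤ 1) : pinch g 1 = 1 := by grind [pinch]

theorem eq_three_quarters_of_pinch_zero_left {y : ℝ} (h : pinch 0 y = 1 / 2) : y = 3 / 4 := by
  have : 2 * pinch 0 y = 1 := by rw [h]; norm_num
  have : 4 * y = 3 := by grind [pinch]
  linarith

theorem eq_quarter_of_pinch_one_left {y : ℝ} (h : pinch 1 y = 1 / 2) : y = 1 / 4 := by
  have : 2 * pinch 1 y = 1 := by rw [h]; norm_num
  have : 4 * y = 1 := by grind [pinch]
  linarith

/-- The piecewise linear map of `[0, 1]` onto itself which climbs from `0` to `2 / 3`, descends to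
`1 / 3` and climbs to `1`, with turning points at `1 / 3` and `2 / 3`. -/
def zigzag (z : ℝ) : ℝ := pinch (1 - z) z

theorem zigzag_eq_zero {z : ℝ} (hz : z ∈ Icc 0 1) (h : zigzag z = 0) : z = 0 := by
  grind [zigzag, pinch]

theorem zigzag_eq_one {z : ℝ} (hz : z ∈ Icc 0 1) (h : zigzag z = 1) : z = 1 := by
  grind [zigzag, pinch]

theorem zigzag_one_third : zigzag (1 / 3) = 2 / 3 := by norm_num [zigzag, pinch]

theorem zigzag_two_thirds : zigzag (2 / 3) = 1 / 3 := by norm_num [zigzag, pinch]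

end Truncation

section AffineFamily

variable {T X : Type*} [TopologicalSpace X] {v : T → C(X, I)} {A A' B B' : Set X}

/-- A family of maps to the unit interval which separates points and is closed under truncated
rational affine combinations of two members. On a compact space such a family separates disjoint
closed sets, by a rational version of the Stone–Weierstrass argument. -/
structure IsAffineFamily (v : T → C(X, I)) : Prop where
  exists_ne : ∀ ⦃x y⦄, x ≠ y → ∃ t, v t x ≠ v t y
  exists_affine : ∀ (a b c : ℚ) s t, ∃ u, ∀ x, v u x = clamp (a * v s x + b * v t x + c)

/-- Some member of the family `v` vanishes on `A` and is equal to `1` on `B`. -/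
def SeparatedBy (v : T → C(X, I)) (A B : Set X) : Prop :=
  ∃ t, EqOn (v t) 0 A ∧ EqOn (v t) 1 B

theorem SeparatedBy.mono (h : SeparatedBy v A B) (hA : A' ⊆ A) (hB : B' ⊆ B) :
    SeparatedBy v A' B' :=
  let ⟨t, h0, h1⟩ := h
  ⟨t, h0.mono hA, h1.mono hB⟩

theorem exists_rat_affine_lt_zero_and_one_lt {u w : ℝ} (h : u ≠ w) :
    ∃ c d : ℚ, c * u + d < 0 ∧ 1 < c * w + d := by
  rcases h.lt_or_gt with huw | hwu
  · obtain ⟨q, huq, hqw⟩ := exists_rat_btwn huw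
    obtain ⟨c, hc⟩ := exists_rat_gt (1 / (w - q))
    have hpos : 0 < w - q := sub_pos.2 hqw
    have hc0 : (0 : ℝ) < c := (one_div_pos.2 hpos).trans hc
    have hcw := (div_lt_iff₀ hpos).1 hc
    refine ⟨c, -(c * q), ?_, ?_⟩ <;> push_cast <;> nlinarith
  · obtain ⟨q, hwq, hqu⟩ := exists_rat_btwn hwu
    obtain ⟨c, hc⟩ := exists_rat_gt (1 / (q - w))
    have hpos : 0 < q - w := sub_pos.2 hwq
    have hc0 : (0 : ℝ) < c := (one_div_pos.2 hpos).trans hc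
    have hcw := (div_lt_iff₀ hpos).1 hc
    refine ⟨-c, c * q, ?_, ?_⟩ <;> push_cast <;> nlinarith

namespace IsAffineFamily

theorem t2Space (hv : IsAffineFamily v) : T2Space X :=
  .of_injective_continuous (f := fun x t ↦ v t x)
    (fun _ _ h ↦ not_imp_comm.1 (hv.exists_ne (y := _)) fun ⟨t, ht⟩ ↦ ht (congrFun h t))
    (continuous_pi fun t ↦ (v t).continuous)

theorem comp (hv : IsAffineFamily v) {Y : Type*} [TopologicalSpace Y] {φ : C(Y, X)}
    (hφ : Function.Injective φ) : IsAffineFamily fun t ↦ (v t).comp φ where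
  exists_ne _ _ hxy := hv.exists_ne (hφ.ne hxy)
  exists_affine a b c s t := (hv.exists_affine a b c s t).imp fun _ hu y ↦ hu (φ y)

theorem exists_average (hv : IsAffineFamily v) (s t : T) :
    ∃ u, ∀ x, (v u x : ℝ) = (v s x + v t x) / 2 := by
  obtain ⟨u, hu⟩ := hv.exists_affine (1 / 2) (1 / 2) 0 s t
  refine ⟨u, fun x ↦ ?_⟩
  have hs := (v s x).2
  have ht := (v t x).2
  rw [hu, coe_clamp_of_mem] <;> push_cast
  · ring
  · constructor <;> linarith [hs.1, hs.2, ht.1, ht.2]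

theorem separatedBy_union_left (hv : IsAffineFamily v) (hA : SeparatedBy v A B)
    (hA' : SeparatedBy v A' B) : SeparatedBy v (A ∪ A') B := by
  obtain ⟨s, hs0, hs1⟩ := hA
  obtain ⟨t, ht0, ht1⟩ := hA'
  obtain ⟨u, hu⟩ := hv.exists_affine 1 1 (-1) s t
  refine ⟨u, fun x hx ↦ ?_, fun x hx ↦ ?_⟩
  · refine (hu x).trans (clamp_eq_zero.2 ?_)
    rcases hx with hx | hx
    · simpa [hs0 hx] using (v t x).2.2
    · simpa [ht0 hx] using (v s x).2.2
  · exact (hu x).trans (clamp_eq_one.2 (by simp [hs1 hx, ht1 hx]))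

theorem separatedBy_union_right (hv : IsAffineFamily v) (hB : SeparatedBy v A B)
    (hB' : SeparatedBy v A B') : SeparatedBy v A (B ∪ B') := by
  obtain ⟨s, hs0, hs1⟩ := hB
  obtain ⟨t, ht0, ht1⟩ := hB'
  obtain ⟨u, hu⟩ := hv.exists_affine 1 1 0 s t
  refine ⟨u, fun x hx ↦ ?_, fun x hx ↦ ?_⟩
  · exact (hu x).trans (clamp_eq_zero.2 (by simp [hs0 hx, ht0 hx]))
  · refine (hu x).trans (clamp_eq_one.2 ?_)
    rcases hx with hx | hx
    · simpa [hs1 hx] using (v t x).2.1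
    · simpa [ht1 hx] using (v s x).2.1

theorem exists_nhds_separatedBy (hv : IsAffineFamily v) {x y : X} (hxy : x ≠ y) :
    ∃ U ∈ 𝓝 x, ∃ V ∈ 𝓝 y, SeparatedBy v U V := by
  obtain ⟨t, ht⟩ := hv.exists_ne hxy
  obtain ⟨c, d, hx, hy⟩ := exists_rat_affine_lt_zero_and_one_lt (Subtype.coe_ne_coe.2 ht)
  obtain ⟨u, hu⟩ := hv.exists_affine c 0 d t t
  have hcont : Continuous fun w ↦ (c : ℝ) * v t w + d := by fun_prop
  refine ⟨_, (isOpen_Iio.preimage hcont).mem_nhds hx, _,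
    (isOpen_Ioi.preimage hcont).mem_nhds hy, u, fun w hw ↦ ?_, fun w hw ↦ ?_⟩
  · exact (hu w).trans (clamp_eq_zero.2 (by simpa using le_of_lt hw))
  · exact (hu w).trans (clamp_eq_one.2 (by simpa using le_of_lt hw))

variable [Nonempty T]

theorem separatedBy_empty_left (hv : IsAffineFamily v) : SeparatedBy v ∅ B := by
  obtain ⟨u, hu⟩ := hv.exists_affine 0 0 1 (Classical.arbitrary T) (Classical.arbitrary T)
  exact ⟨u, eqOn_empty _ _, fun x _ ↦ (hu x).trans (clamp_eq_one.2 (by simp))⟩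

theorem separatedBy_empty_right (hv : IsAffineFamily v) : SeparatedBy v A ∅ := by
  obtain ⟨u, hu⟩ := hv.exists_affine 0 0 0 (Classical.arbitrary T) (Classical.arbitrary T)
  exact ⟨u, fun x _ ↦ (hu x).trans (clamp_eq_zero.2 (by simp)), eqOn_empty _ _⟩

theorem exists_nhds_separatedBy_of_notMem (hv : IsAffineFamily v) (hA : IsCompact A) {y : X}
    (hy : y ∉ A) : ∃ V ∈ 𝓝 y, SeparatedBy v A V := by
  refine hA.induction_on (p := fun A ↦ ∃ V ∈ 𝓝 y, SeparatedBy v A V)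
    ⟨univ, Filter.univ_mem, hv.separatedBy_empty_left⟩ ?_ ?_ fun x hx ↦ ?_
  · exact fun A A' hAA' ⟨V, hV, h⟩ ↦ ⟨V, hV, h.mono hAA' subset_rfl⟩
  · exact fun A A' ⟨V, hV, h⟩ ⟨V', hV', h'⟩ ↦ ⟨V ∩ V', Filter.inter_mem hV hV',
      hv.separatedBy_union_left (h.mono subset_rfl inter_subset_left)
        (h'.mono subset_rfl inter_subset_right)⟩
  · obtain ⟨U, hU, V, hV, h⟩ := hv.exists_nhds_separatedBy (ne_of_mem_of_not_mem hx hy)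
    exact ⟨U, mem_nhdsWithin_of_mem_nhds hU, V, hV, h⟩

theorem separatedBy_of_disjoint (hv : IsAffineFamily v) (hA : IsCompact A) (hB : IsCompact B)
    (hAB : Disjoint A B) : SeparatedBy v A B := by
  refine hB.induction_on (p := SeparatedBy v A) hv.separatedBy_empty_right
    (fun B B' hBB' h ↦ h.mono subset_rfl hBB') (fun B B' ↦ hv.separatedBy_union_right)
    fun y hy ↦ ?_
  obtain ⟨V, hV, h⟩ := hv.exists_nhds_separatedBy_of_notMem hA (hAB.notMem_of_mem_right hy)
  exact ⟨V, mem_nhdsWithin_of_mem_nhds hV, h⟩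

theorem isTopologicalBasis [CompactSpace X] (hv : IsAffineFamily v) :
    TopologicalSpace.IsTopologicalBasis (range fun t ↦ {x | 0 < v t x}) := by
  refine TopologicalSpace.isTopologicalBasis_of_isOpen_of_nhds ?_ fun x U hx hU ↦ ?_
  · rintro _ ⟨t, rfl⟩
    exact isOpen_lt continuous_const (v t).continuous
  · obtain ⟨t, h0, h1⟩ := hv.separatedBy_of_disjoint hU.isClosed_compl.isCompact
      (isCompact_singleton (x := x)) (disjoint_singleton_right.2 (not_not_intro hx))
    have htx : v t x = 1 := h1 rfl
    refine ⟨_, ⟨t, rfl⟩, (zero_lt_one.trans_eq htx.symm : 0 < v t x), fun w hw ↦ ?_⟩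
    by_contra hwU
    exact (ne_of_gt hw) (h0 hwU)

theorem not_totallyDisconnectedSpace [CompactSpace X] (hv : IsAffineFamily v) {s : T}
    (hs : ∀ g, ∃ x, pinch (v g x) (v s x) = 1 / 2) : ¬ TotallyDisconnectedSpace X := by
  intro _
  have := hv.t2Space
  obtain ⟨W, hW, hAW, hWU⟩ := exists_clopen_of_closed_subset_open
    (Z := {x | (v s x : ℝ) ≤ 1 / 4}) (U := {x | (v s x : ℝ) < 3 / 4})
    (isClosed_le (by fun_prop) continuous_const) (isOpen_lt (by fun_prop) continuous_const)
    fun x (hx : (v s x : ℝ) ≤ 1 / 4) ↦ show (v s x : ℝ) < 3 / 4 from hx.trans_lt (by norm_num)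
  obtain ⟨g, hg0, hg1⟩ := hv.separatedBy_of_disjoint hW.isClosed.isCompact
    hW.compl.isClosed.isCompact disjoint_compl_right
  obtain ⟨x, hx⟩ := hs g
  by_cases hxW : x ∈ W
  · rw [hg0 hxW] at hx
    exact (hWU hxW).ne (eq_three_quarters_of_pinch_zero_left hx)
  · rw [hg1 hxW] at hx
    exact hxW (hAW (eq_quarter_of_pinch_one_left hx).le)

end IsAffineFamily

theorem topWeight_le_of_isTopologicalBasis {X : Type*} [TopologicalSpace X] {B : Set (Set X)}
    (hB : TopologicalSpace.IsTopologicalBasis B) : topWeight X ≤ Cardinal.mk B :=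
  ciInf_le' _ (⟨B, hB⟩ : {B // TopologicalSpace.IsTopologicalBasis B})

end AffineFamily

section CrookedFamily

/-- `p` climbs from `0` to `1` while `f` climbs from `1 / 3` to `2 / 3`, and on the middle third of
this climb each `y i` satisfies the pinching equation with respect to `g i`. -/
structure Screens {ι : Type*} (f p : ℝ) (g y : ι → ℝ) : Prop where
  eq_zero : f < 1 / 3 → p = 0
  eq_one : 2 / 3 < f → p = 1
  pinch_eq : 1 / 3 < p → p < 2 / 3 → ∀ i, pinch (g i) (y i) = 1 / 2

/-- An affine family in which every member `f` factors through `zigzag` and carries a `K`-indexed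
family of further members `y`, such that any pinching equations for finitely many of them hold
somewhere between the sets `f = 0` and `f = 1`. The first property makes the space hereditarily
indecomposable, the second makes `{y i ≤ 1 / 4}` and `{3 / 4 ≤ y i}` an essential family. -/
structure IsCrookedFamily {T X : Type*} [TopologicalSpace X] (K : Type*) (v : T → C(X, I)) :
    Prop extends IsAffineFamily v where
  exists_zigzag_eq : ∀ f, ∃ z, ∀ x, zigzag (v z x) = v f x
  exists_screens : ∀ f, ∃ y : K → T, ∀ (s : Finset K) (g : s → T), ∃ p, ∀ x,
    Screens (v f x) (v p x) (fun i ↦ v (g i) x) fun i : s ↦ v (y i) x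

namespace IsCrookedFamily

variable {K T X : Type*} [TopologicalSpace X] {v : T → C(X, I)}

theorem comp (hv : IsCrookedFamily K v) {Y : Type*} [TopologicalSpace Y] {φ : C(Y, X)}
    (hφ : Function.Injective φ) : IsCrookedFamily K fun t ↦ (v t).comp φ where
  toIsAffineFamily := hv.toIsAffineFamily.comp hφ
  exists_zigzag_eq f := (hv.exists_zigzag_eq f).imp fun _ hz y ↦ hz (φ y)
  exists_screens f := (hv.exists_screens f).imp fun _ hy s g ↦
    (hy s g).imp fun _ hp y ↦ hp (φ y)

theorem restrict (hv : IsCrookedFamily K v) (C : Set X) :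
    IsCrookedFamily K fun t ↦ (v t).restrict C :=
  hv.comp (φ := ⟨Subtype.val, continuous_subtype_val⟩) Subtype.val_injective

variable [Nonempty T]

theorem exists_forall_pinch_eq [PreconnectedSpace X] (hv : IsCrookedFamily K v) {a b : X}
    (hab : a ≠ b) : ∃ y : K → T, ∀ (s : Finset K) (g : s → T),
      ∃ x, ∀ i : s, pinch (v (g i) x) (v (y i) x) = 1 / 2 := by
  have := hv.t2Space
  obtain ⟨f, hfa, hfb⟩ := hv.separatedBy_of_disjoint (isCompact_singleton (x := a))
    (isCompact_singleton (x := b)) (disjoint_singleton.2 hab)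
  obtain ⟨y, hy⟩ := hv.exists_screens f
  refine ⟨y, fun s g ↦ ?_⟩
  obtain ⟨p, hp⟩ := hy s g
  have hpa : (v p a : ℝ) = 0 := (hp a).eq_zero (by simp [hfa rfl])
  have hpb : (v p b : ℝ) = 1 := (hp b).eq_one (by norm_num [hfb rfl])
  obtain ⟨x, hx⟩ := mem_range_of_exists_le_of_exists_ge (f := fun x ↦ (v p x : ℝ)) (c := 1 / 2)
    (by fun_prop) ⟨a, by simp [hpa]⟩ ⟨b, by norm_num [hpb]⟩
  exact ⟨x, (hp x).pinch_eq (by norm_num [hx]) (by norm_num [hx])⟩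

variable [CompactSpace X]

theorem hereditarilyIndecomposable (hv : IsCrookedFamily K v) : HereditarilyIndecomposable X := by
  have := hv.t2Space
  refine hereditarilyIndecomposable_of_forall_exists_continuous fun C D a b hC hD ha hb ↦ ?_
  obtain ⟨s, hs0, hs1⟩ := hv.separatedBy_of_disjoint (isCompact_singleton (x := a)) hD.isCompact
    (disjoint_singleton_left.2 ha.2)
  obtain ⟨t, ht0, ht1⟩ := hv.separatedBy_of_disjoint hC.isCompact (isCompact_singleton (x := b))
    (disjoint_singleton_right.2 hb.2)
  obtain ⟨f, hf⟩ := hv.exists_average s t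
  obtain ⟨z, hz⟩ := hv.exists_zigzag_eq f
  have hza : (v z a : ℝ) = 0 := zigzag_eq_zero (v z a).2 (by simp [hz, hf, hs0 rfl, ht0 ha.1])
  have hzb : (v z b : ℝ) = 1 := zigzag_eq_one (v z b).2 (by simp [hz, hf, hs1 hb.1, ht1 rfl])
  have hfC : ∀ x ∈ C, (v f x : ℝ) < 2 / 3 := fun x hx ↦ by
    have htx : (v t x : ℝ) = 0 := congrArg Subtype.val (ht0 hx)
    linarith [hf x, (v s x).2.2]
  have hfD : ∀ x ∈ D, 1 / 3 < (v f x : ℝ) := fun x hx ↦ by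
    have hsx : (v s x : ℝ) = 1 := congrArg Subtype.val (hs1 hx)
    linarith [hf x, (v t x).2.1]
  exact ⟨fun x ↦ v z x, by fun_prop, by simp [hza], by norm_num [hzb],
    fun x hx (h : (v z x : ℝ) = 1 / 3) ↦ (hfC x hx).ne (by rw [← hz, h, zigzag_one_third]),
    fun x hx (h : (v z x : ℝ) = 2 / 3) ↦ (hfD x hx).ne' (by rw [← hz, h, zigzag_two_thirds])⟩

theorem exists_isEssentialFamily [PreconnectedSpace X] [Nontrivial X]
    (hv : IsCrookedFamily K v) : ∃ A B : K → Set X, IsEssentialFamily A B := by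
  have := hv.t2Space
  obtain ⟨a, b, hab⟩ := exists_pair_ne X
  obtain ⟨y, hy⟩ := hv.exists_forall_pinch_eq hab
  refine ⟨fun i ↦ {x | (v (y i) x : ℝ) ≤ 1 / 4}, fun i ↦ {x | 3 / 4 ≤ (v (y i) x : ℝ)},
    isEssentialFamily_of_forall_finset_iUnion_ne_univ
      (fun i ↦ isClosed_le (by fun_prop) continuous_const)
      (fun i ↦ isClosed_le continuous_const (by fun_prop))
      (fun i ↦ disjoint_left.2 fun x (h : (v (y i) x : ℝ) ≤ 1 / 4) (h' : 3 / 4 ≤ (v (y i) x : ℝ)) ↦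
        by linarith)
      fun s C D hC hD hCD hAC hBD hcover ↦ ?_⟩
  choose g hg0 hg1 using fun i ↦
    hv.separatedBy_of_disjoint (hC i).isCompact (hD i).isCompact (hCD i)
  obtain ⟨x, hx⟩ := hy s g
  obtain ⟨i, hxC | hxD⟩ := mem_iUnion.1 (hcover ▸ mem_univ x)
  · have h := hx i
    rw [hg0 i hxC] at h
    exact (hCD i).notMem_of_mem_left hxC (hBD i (eq_three_quarters_of_pinch_zero_left h).ge)
  · have h := hx i
    rw [hg1 i hxD] at h
    exact (hCD i).notMem_of_mem_right hxD (hAC i (eq_quarter_of_pinch_one_left h).le)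

end IsCrookedFamily

end CrookedFamily

universe u

/-- Formal names for the members of the universal crooked family: a base function, the truncated
rational affine combinations, the factors through `zigzag`, the `K`-indexed members attached to a
member `f`, and the members screening the pinching equations for the indices in `s` with respect to
the family `g`. -/
inductive FunctionTerm (K : Type u) : Type u
  | star : FunctionTerm K
  | affine (a b c : ℚ) (f g : FunctionTerm K) : FunctionTerm K
  | crook (f : FunctionTerm K) : FunctionTerm K
  | coord (f : FunctionTerm K) (i : K) : FunctionTerm K
  | screen (s : Finset K) (f : FunctionTerm K) (g : s → FunctionTerm K) : FunctionTerm K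

namespace FunctionTerm

instance (K : Type u) : Nonempty (FunctionTerm K) := ⟨star⟩

section Cardinality

/-- The node labels of a term viewed as a tree, one summand for each constructor. -/
abbrev Label (K : Type u) : Type u := Unit ⊕ (ℚ × ℚ × ℚ) ⊕ Unit ⊕ K ⊕ Finset K

/-- The branches at a node of a term viewed as a tree. -/
def Branch {K : Type u} : Label K → Type u
  | .inl _ => PEmpty
  | .inr (.inl _) => ULift Bool
  | .inr (.inr (.inl _)) => PUnit
  | .inr (.inr (.inr (.inl _))) => PUnit
  | .inr (.inr (.inr (.inr s))) => Option s

instance {K : Type u} (l : Label K) : Finite (Branch l) := by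
  rcases l with _ | _ | _ | _ | s <;> unfold Branch <;> infer_instance

/-- The term represented by a well-founded tree. -/
def ofTree {K : Type u} : WType (Branch (K := K)) → FunctionTerm K :=
  WType.elim _ fun
    | ⟨.inl _, _⟩ => star
    | ⟨.inr (.inl (a, b, c)), t⟩ => affine a b c (t ⟨false⟩) (t ⟨true⟩)
    | ⟨.inr (.inr (.inl _)), t⟩ => crook (t ⟨⟩)
    | ⟨.inr (.inr (.inr (.inl i))), t⟩ => coord (t ⟨⟩) i
    | ⟨.inr (.inr (.inr (.inr s))), t⟩ => screen s (t none) fun i ↦ t (some i)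

theorem ofTree_surjective {K : Type u} : Function.Surjective (ofTree (K := K)) := by
  intro t
  induction t with
  | star => exact ⟨⟨.inl (), PEmpty.elim⟩, rfl⟩
  | affine a b c f g hf hg =>
    obtain ⟨x, rfl⟩ := hf
    obtain ⟨y, rfl⟩ := hg
    exact ⟨⟨.inr (.inl (a, b, c)), fun d ↦ bif d.down then y else x⟩, rfl⟩
  | crook f hf =>
    obtain ⟨x, rfl⟩ := hf
    exact ⟨⟨.inr (.inr (.inl ())), fun _ ↦ x⟩, rfl⟩
  | coord f i hf =>
    obtain ⟨x, rfl⟩ := hf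
    exact ⟨⟨.inr (.inr (.inr (.inl i))), fun _ ↦ x⟩, rfl⟩
  | screen s f g hf hg =>
    obtain ⟨x, rfl⟩ := hf
    choose y hy using hg
    obtain rfl : (fun i ↦ ofTree (y i)) = g := funext hy
    exact ⟨⟨.inr (.inr (.inr (.inr s))), fun d ↦ d.elim x y⟩, rfl⟩

open Cardinal in
theorem mk_label_le (K : Type u) [Infinite K] : #(Label K) ≤ #K := by
  have hK := aleph0_le_mk K
  have hcountable (α : Type) [Countable α] : lift.{u} #α ≤ #K :=
    (lift_le_aleph0.2 mk_le_aleph0).trans hK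
  simp only [mk_sum, lift_id, lift_uzero, mk_finset_of_infinite]
  exact add_le_of_le hK (hcountable _) <| add_le_of_le hK (hcountable _) <|
    add_le_of_le hK (hcountable _) <| add_le_of_le hK le_rfl le_rfl

open Cardinal in
theorem mk_le (K : Type u) [Infinite K] : #(FunctionTerm K) ≤ #K :=
  (mk_le_of_surjective ofTree_surjective).trans <|
    WType.cardinalMk_le_max_aleph0_of_finite.trans (max_le (mk_label_le K) (aleph0_le_mk K))

end Cardinality

section Valuation

variable {K : Type u}

/-- The arguments of a `screen` term. -/
structure ScreenData (K : Type u) where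
  support : Finset K
  base : FunctionTerm K
  target : support → FunctionTerm K

/-- The `screen` term with the given arguments. -/
def ScreenData.term (α : ScreenData K) : FunctionTerm K := screen α.support α.base α.target

/-- A valuation of terms respecting the intended meaning of `affine` and `crook`. -/
structure IsLawful (x : FunctionTerm K → I) : Prop where
  affine : ∀ a b c f g, x (.affine a b c f g) = clamp (a * x f + b * x g + c)
  crook : ∀ f, zigzag (x (.crook f)) = x f

/-- A valuation of terms respecting the intended meaning of the `screen` term with data `α`. -/
def IsScreened (x : FunctionTerm K → I) (α : ScreenData K) : Prop :=
  Screens (x α.base) (x α.term) (fun i ↦ x (α.target i)) fun i : α.support ↦ x (coord α.base i)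

end Valuation

noncomputable section Consistency

/-- The `k`-th of `n` consecutive windows subdividing `[1 / 3, 2 / 3]`, as a function climbing from
`0` to `1` on it. -/
def slot (n k : ℕ) (v : ℝ) : I := clamp (3 * n * (v - 1 / 3) - k)

theorem slot_eq_zero {n k : ℕ} {v : ℝ} (hv : v < 1 / 3) : slot n k v = 0 := by
  have hn : (n : ℝ) * (v - 1 / 3) ≤ 0 :=
    mul_nonpos_of_nonneg_of_nonpos n.cast_nonneg (by linarith)
  exact clamp_eq_zero.2 (by linarith [(k.cast_nonneg : (0 : ℝ) ≤ k)])

theorem slot_eq_one {n k : ℕ} (hk : k < n) {v : ℝ} (hv : 2 / 3 < v) : slot n k v = 1 := by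
  have hkn : (k + 1 : ℝ) ≤ n := by exact_mod_cast hk
  exact clamp_eq_one.2 (by nlinarith)

/-- A bump supported in `[0, 1]` and equal to `1` on `[1 / 3, 2 / 3]`. -/
def bump (s : ℝ) : ℝ := clamp (min (3 * s) (3 - 3 * s))

@[fun_prop]
theorem continuous_bump : Continuous bump := by unfold bump; fun_prop

theorem bump_eq_one {s : ℝ} (h : 1 / 3 < s) (h' : s < 2 / 3) : bump s = 1 :=
  congrArg Subtype.val (clamp_eq_one.2 (le_min (by linarith) (by linarith)))

theorem bump_zero : bump 0 = 0 :=
  congrArg Subtype.val (clamp_eq_zero.2 ((min_le_left _ _).trans (by norm_num)))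

theorem bump_one : bump 1 = 0 :=
  congrArg Subtype.val (clamp_eq_zero.2 ((min_le_right _ _).trans (by norm_num)))

theorem bump_slot_eq_zero {n j k : ℕ} (hjk : j ≠ k) {v : ℝ} (h0 : slot n k v ≠ 0)
    (h1 : slot n k v ≠ 1) : bump (slot n j v) = 0 := by
  have hpos := not_le.1 (clamp_eq_zero.not.1 h0)
  have hlt := not_le.1 (clamp_eq_one.not.1 h1)
  rcases hjk.lt_or_gt with hj | hk
  · have hj' : (j + 1 : ℝ) ≤ k := by exact_mod_cast hj
    have hone : slot n j v = 1 := clamp_eq_one.2 (by linarith)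
    rw [hone, Icc.coe_one, bump_one]
  · have hk' : (k + 1 : ℝ) ≤ j := by exact_mod_cast hk
    have hzero : slot n j v = 0 := clamp_eq_zero.2 (by linarith)
    rw [hzero, Icc.coe_zero, bump_zero]

open Classical in
/-- The target at an arbitrary index, with the junk value `star` outside the support. -/
def ScreenData.targetAt {K : Type u} (α : ScreenData K) (i : K) : FunctionTerm K :=
  if hi : i ∈ α.support then α.target ⟨i, hi⟩ else star

variable {K : Type u} (n : ℕ) (e : ScreenData K → ℕ)

/-- The valuation with prescribed values `r` at the terms `star`, `crook f` and `coord f i`, which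
gives each `screen` term its own slot: the pinching equations of different terms, which may be
incompatible, are thus imposed at different places. -/
def eval (r : FunctionTerm K → I) : FunctionTerm K → I
  | star => r star
  | affine a b c f g => clamp (a * eval r f + b * eval r g + c)
  | crook f => r (crook f)
  | coord f i => r (coord f i)
  | screen s f g => slot n (e ⟨s, f, g⟩) (eval r f)

theorem continuous_eval (t : FunctionTerm K) : Continuous fun r ↦ eval n e r t := by
  induction t with
  | star | crook | coord => simp only [eval]; fun_prop
  | affine a b c f g hf hg => simp only [eval]; fun_prop
  | screen s f g hf _ => simp only [eval, slot]; fun_prop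

/-- The function whose vanishing is the equation for the coordinate `t` of `r`, in the system
expressing the laws of `crook` terms and of the `screen` terms in `Φ`, and a pinching equation for
`star`. The values of `r` at `affine` and `screen` terms are irrelevant. -/
def equation (Φ : Finset (ScreenData K)) (g : FunctionTerm K) (r : FunctionTerm K → I) :
    FunctionTerm K → ℝ
  | star => pinch (eval n e r g) (r star) - 1 / 2
  | affine a b c f g => r (affine a b c f g) - 1 / 2
  | crook f => zigzag (r (crook f)) - eval n e r f
  | coord f i => r (coord f i) - 1 / 2 + ∑ α ∈ Φ, bump (slot n (e α) (eval n e r f)) *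
      (pinch (eval n e r (α.targetAt i)) (r (coord f i)) - r (coord f i))
  | screen s f g => r (screen s f g) - 1 / 2

variable {n e} {Φ : Finset (ScreenData K)} {g : FunctionTerm K}

theorem continuous_equation (t : FunctionTerm K) : Continuous fun r ↦ equation n e Φ g r t := by
  have heval := continuous_eval n e
  cases t <;> simp only [equation, zigzag, slot] <;> fun_prop

theorem equation_nonpos {r : FunctionTerm K → I} {t : FunctionTerm K} (ht : r t = 0) :
    equation n e Φ g r t ≤ 0 := by
  have hpinch (u) : pinch (eval n e r u) 0 = 0 := pinch_zero_right (eval n e r u).2.1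
  cases t with
  | star | affine | screen => simp [equation, ht, hpinch]
  | coord => simp [equation, ht, hpinch]
  | crook f => simpa [equation, ht, zigzag, pinch_zero_right] using (eval n e r f).2.1

theorem equation_nonneg {r : FunctionTerm K → I} {t : FunctionTerm K} (ht : r t = 1) :
    0 ≤ equation n e Φ g r t := by
  have hpinch (u) : pinch (eval n e r u) 1 = 1 := pinch_one_right (eval n e r u).2.2
  cases t with
  | star | affine | coord | screen => norm_num [equation, ht, hpinch]
  | crook f => simpa [equation, ht, zigzag, pinch_one_right] using (eval n e r f).2.2

theorem isLawful_eval {r : FunctionTerm K → I} (hr : ∀ t, equation n e Φ g r t = 0) :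
    IsLawful (eval n e r) where
  affine _ _ _ _ _ := rfl
  crook f := sub_eq_zero.1 (hr (crook f))

theorem isScreened_eval (he : ∀ α ∈ Φ, e α < n) (hinj : InjOn e Φ) {r : FunctionTerm K → I}
    (hr : ∀ t, equation n e Φ g r t = 0) {α : ScreenData K} (hα : α ∈ Φ) :
    IsScreened (eval n e r) α where
  eq_zero h := congrArg Subtype.val (slot_eq_zero h)
  eq_one h := congrArg Subtype.val (slot_eq_one (he α hα) h)
  pinch_eq h h' i := by
    change 1 / 3 < (slot n (e α) (eval n e r α.base) : ℝ) at h
    change (slot n (e α) (eval n e r α.base) : ℝ) < 2 / 3 at h'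
    have hne0 : slot n (e α) (eval n e r α.base) ≠ 0 := fun h0 ↦ by norm_num [h0] at h
    have hne1 : slot n (e α) (eval n e r α.base) ≠ 1 := fun h1 ↦ by norm_num [h1] at h'
    have hcoord := hr (coord α.base i)
    simp only [equation] at hcoord
    rw [Finset.sum_eq_single_of_mem α hα fun β hβ hβα ↦ by
      rw [bump_slot_eq_zero (hinj.ne hβ hα hβα) hne0 hne1, zero_mul], bump_eq_one h h'] at hcoord
    have htarget : α.targetAt i = α.target i := dif_pos i.2
    rw [htarget] at hcoord
    simp only [eval]
    linarith

theorem exists_isLawful_forall_isScreened_pinch_eq (Φ : Finset (ScreenData K))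
    (g : FunctionTerm K) : ∃ x : FunctionTerm K → I, IsLawful x ∧ (∀ α ∈ Φ, IsScreened x α) ∧
      pinch (x g) (x star) = 1 / 2 := by
  classical
  let e : ScreenData K → ℕ := Φ.toList.idxOf
  have he : ∀ α ∈ Φ, e α < Φ.toList.length := fun α hα ↦
    List.idxOf_lt_length_of_mem (Finset.mem_toList.2 hα)
  have hinj : InjOn e Φ := fun α hα β _ h ↦ (List.idxOf_inj (Finset.mem_toList.2 hα)).1 h
  obtain ⟨r, hr⟩ := exists_forall_eq_zero_of_nonpos_of_nonneg
    (continuous_equation (n := Φ.toList.length) (e := e) (Φ := Φ) (g := g))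
    (fun _ _ ↦ equation_nonpos) (fun _ _ ↦ equation_nonneg)
  exact ⟨eval _ e r, isLawful_eval hr, fun α ↦ isScreened_eval he hinj hr,
    sub_eq_zero.1 (hr star)⟩

end Consistency

end FunctionTerm

section ModelSpace

theorem isClosed_setOf_screens {ι X : Type*} [TopologicalSpace X] {f p : X → ℝ} {g y : ι → X → ℝ}
    (hf : Continuous f) (hp : Continuous p) (hg : ∀ i, Continuous (g i))
    (hy : ∀ i, Continuous (y i)) :
    IsClosed {x | Screens (f x) (p x) (fun i ↦ g i x) fun i ↦ y i x} := by
  have hzero : IsClosed {x | f x < 1 / 3 → p x = 0} :=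
    isClosed_imp (isOpen_lt hf continuous_const) (isClosed_eq hp continuous_const)
  have hone : IsClosed {x | 2 / 3 < f x → p x = 1} :=
    isClosed_imp (isOpen_lt continuous_const hf) (isClosed_eq hp continuous_const)
  have hpinch : IsClosed {x | ∀ i, pinch (g i x) (y i x) = 1 / 2} := by
    simp only [ofPred_forall]
    exact isClosed_iInter fun i ↦ isClosed_eq (by fun_prop) continuous_const
  have hmiddle : IsClosed {x | 1 / 3 < p x → p x < 2 / 3 → ∀ i, pinch (g i x) (y i x) = 1 / 2} :=
    isClosed_imp (isOpen_lt continuous_const hp) <|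
      isClosed_imp (isOpen_lt hp continuous_const) hpinch
  convert hzero.inter (hone.inter hmiddle) using 1
  exact Set.ext fun x ↦ ⟨fun h ↦ ⟨h.1, h.2, h.3⟩, fun h ↦ ⟨h.1, h.2.1, h.2.2⟩⟩

namespace FunctionTerm

variable {K : Type u}

theorem isClosed_setOf_isLawful : IsClosed {x : FunctionTerm K → I | IsLawful x} := by
  have haffine : IsClosed {x : FunctionTerm K → I | ∀ (a b c : ℚ) f g,
      x (affine a b c f g) = clamp (a * x f + b * x g + c)} := by
    simp only [ofPred_forall]
    exact isClosed_iInter fun a ↦ isClosed_iInter fun b ↦ isClosed_iInter fun c ↦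
      isClosed_iInter fun f ↦ isClosed_iInter fun g ↦ isClosed_eq (by fun_prop) (by fun_prop)
  have hcrook : IsClosed {x : FunctionTerm K → I | ∀ f, zigzag (x (crook f)) = x f} := by
    simp only [ofPred_forall, zigzag]
    exact isClosed_iInter fun f ↦ isClosed_eq (by fun_prop) (by fun_prop)
  convert haffine.inter hcrook using 1
  exact Set.ext fun x ↦ ⟨fun h ↦ ⟨h.1, h.2⟩, fun h ↦ ⟨h.1, h.2⟩⟩

theorem isClosed_setOf_isScreened (α : ScreenData K) :
    IsClosed {x : FunctionTerm K → I | IsScreened x α} :=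
  isClosed_setOf_screens (by fun_prop) (by fun_prop) (by fun_prop) (by fun_prop)

variable (K) in
/-- The space of all valuations respecting the intended meaning of every term. It is universal in
that its coordinates form a crooked family for formal reasons; only its connectedness properties
require an argument. -/
def ModelSpace : Type u :=
  {x : FunctionTerm K → I // IsLawful x ∧ ∀ α, IsScreened x α}

instance : TopologicalSpace (ModelSpace K) := instTopologicalSpaceSubtype

theorem isClosed_setOf_forall_isScreened :
    IsClosed {x : FunctionTerm K → I | ∀ α, IsScreened x α} := by
  simpa only [ofPred_forall] using isClosed_iInter isClosed_setOf_isScreened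

instance : CompactSpace (ModelSpace K) := isCompact_iff_compactSpace.1
  (isClosed_setOf_isLawful.inter isClosed_setOf_forall_isScreened).isCompact

namespace ModelSpace

/-- The value of a model at a term, as a continuous function of the model. -/
def coordinate (t : FunctionTerm K) : C(ModelSpace K, I) where
  toFun x := x.1 t
  continuous_toFun := (continuous_apply t).comp continuous_subtype_val

theorem isCrookedFamily_coordinate : IsCrookedFamily K (coordinate (K := K)) where
  exists_ne _ _ hxy := Function.ne_iff.1 (Subtype.coe_ne_coe.2 hxy)
  exists_affine a b c s t := ⟨.affine a b c s t, fun x ↦ x.2.1.affine a b c s t⟩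
  exists_zigzag_eq f := ⟨crook f, fun x ↦ x.2.1.crook f⟩
  exists_screens f := ⟨coord f, fun s g ↦ ⟨screen s f g, fun x ↦ x.2.2 ⟨s, f, g⟩⟩⟩

theorem exists_pinch_eq (g : FunctionTerm K) :
    ∃ x, pinch (coordinate g x) (coordinate star x) = 1 / 2 := by
  have hpinch : IsClosed {x : FunctionTerm K → I | pinch (x g) (x star) = 1 / 2} :=
    isClosed_eq (by fun_prop) continuous_const
  obtain ⟨x, ⟨hlawful, hx⟩, hscreened⟩ :=
    (isClosed_setOf_isLawful.inter hpinch).isCompact.inter_iInter_nonempty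
      (fun α : ScreenData K ↦ {x | IsScreened x α}) isClosed_setOf_isScreened fun Φ ↦
      let ⟨x, hlawful, hscreened, hx⟩ := exists_isLawful_forall_isScreened_pinch_eq Φ g
      ⟨x, ⟨hlawful, hx⟩, mem_iInter₂.2 hscreened⟩
  exact ⟨⟨x, hlawful, mem_iInter.1 hscreened⟩, hx⟩

theorem exists_nontrivial_connectedComponent :
    ∃ x : ModelSpace K, (connectedComponent x).Nontrivial := by
  by_contra! h
  exact isCrookedFamily_coordinate.not_totallyDisconnectedSpace exists_pinch_eq
    (totallyDisconnectedSpace_iff_connectedComponent_subsingleton.2 h)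

end ModelSpace

end FunctionTerm

end ModelSpace

theorem exists_hereditarilyIndecomposable_all_subcontinua_essential_general
    (κ : Cardinal.{u}) (hκ : Cardinal.aleph0 ≤ κ) :
    ∃ (H : Type u) (_ : TopologicalSpace H), CompactSpace H ∧ T2Space H ∧
      ConnectedSpace H ∧ Nontrivial H ∧ HereditarilyIndecomposable H ∧
      topWeight H ≤ κ ∧
      ∀ C : Set H, IsCompact C → IsConnected C → C.Nontrivial →
        ∃ A B : κ.out → Set ↥C, IsEssentialFamily A B := by
  have : Infinite κ.out := Cardinal.infinite_iff.2 (hκ.trans_eq κ.mk_out.symm)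
  obtain ⟨x, hx⟩ := FunctionTerm.ModelSpace.exists_nontrivial_connectedComponent (K := κ.out)
  have hv := FunctionTerm.ModelSpace.isCrookedFamily_coordinate.restrict (connectedComponent x)
  have : CompactSpace (connectedComponent x) :=
    isCompact_iff_compactSpace.1 isClosed_connectedComponent.isCompact
  refine ⟨connectedComponent x, inferInstance, inferInstance, hv.t2Space,
    isConnected_iff_connectedSpace.1 isConnected_connectedComponent, hx.coe_sort,
    hv.hereditarilyIndecomposable, ?_, fun C hC hCconn hCnon ↦ ?_⟩
  · calc topWeight (connectedComponent x)
        ≤ Cardinal.mk (FunctionTerm κ.out) :=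
          (topWeight_le_of_isTopologicalBasis hv.isTopologicalBasis).trans Cardinal.mk_range_le
      _ ≤ Cardinal.mk κ.out := FunctionTerm.mk_le κ.out
      _ = κ := κ.mk_out
  · have : CompactSpace C := isCompact_iff_compactSpace.1 hC
    have : ConnectedSpace C := isConnected_iff_connectedSpace.1 hCconn
    have : Nontrivial C := hCnon.coe_sort
    exact (hv.restrict C).exists_isEssentialFamily

/-- For every infinite cardinal `κ` there is a nondegenerate hereditarily indecomposable
continuum of weight at most `κ` all of whose nondegenerate subcontinua have an essential
family of cardinality `κ`. -/
theorem exists_hereditarilyIndecomposable_all_subcontinua_essential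
    (κ : Cardinal) (hκ : Cardinal.aleph0 ≤ κ) :
    ∃ (H : Type) (_ : TopologicalSpace H), CompactSpace H ∧ T2Space H ∧
      ConnectedSpace H ∧ Nontrivial H ∧ HereditarilyIndecomposable H ∧
      topWeight H ≤ κ ∧
      ∀ C : Set H, IsCompact C → IsConnected C → C.Nontrivial →
        ∃ A B : κ.out → Set ↥C, IsEssentialFamily A B := by
  exact exists_hereditarilyIndecomposable_all_subcontinua_essential_general κ hκ
end

section
/- For every index set κ, the family {(A_α, B_α) : α ∈ κ} of pairs of opposite faces of the Tychonoff cube [0,1]^κ is essential: for every choice of partitions L_α between A_α and B_α (α ∈ κ), the intersection ⋂_{α∈κ} L_α is nonempty. -/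
open Set

/-!
Suppose finitely many partitions had empty intersection. Shrinking the cover by their complements
to a closed cover `C i`, choose for each `i` a smooth function with values in `[0, 1]` that is `0`
near the face `x i = 0` and near the part of `C i` on that side of the `i`-th partition, and `1`
near the opposite face and the rest of `C i`. It is locally constant around `C i`, so together these
functions form a smooth self-map `f` of the cube which maps every face into itself and whose
Jacobian determinant vanishes identically.

On the other hand `∫ det f' = 1` over the cube for every such `f`, as in the Milnor–Rogers proof of
Brouwer's theorem. The maps `x + t (f x - x)` preserve the faces for `0 ≤ t ≤ 1`, and for small `t`
they are bijections of the cube with positive Jacobian, so that `∫ det (1 + t (f' - 1)) = 1`. The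
integrand is polynomial in `t`, so this persists at `t = 1`.

Compactness of the Tychonoff cube reduces arbitrary families to finite ones.
-/

open Filter MeasureTheory Topology
open scoped ContDiff NNReal

section Determinant

open Module Polynomial

variable {F M : Type*} [Field F] [AddCommGroup M] [Module F M] [FiniteDimensional F M]

theorem exists_polynomial_eval_eq_det_one_add_smul (A : End F M) :
    ∃ p : F[X], p.natDegree ≤ finrank F M ∧ ∀ t, p.eval t = LinearMap.det (1 + t • A) := by
  let b := finBasis F M
  let a := LinearMap.toMatrix b b A
  refine ⟨((X : F[X]) • a.map C + (1 : Matrix _ _ F).map C).det, ?_, fun t => ?_⟩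
  · simpa using natDegree_det_X_add_C_le a 1
  · rw [← coe_evalRingHom, RingHom.map_det, ← LinearMap.det_toMatrix b]
    congr 1
    ext i j
    by_cases hij : i = j <;> simp [a, LinearMap.toMatrix_one, hij] <;> ring

theorem det_one_add_smul_eq_sum_lagrange_basis [DecidableEq F] {s : Finset F}
    (hs : finrank F M < s.card) (A : End F M) (t : F) :
    LinearMap.det (1 + t • A) =
      ∑ r ∈ s, (Lagrange.basis s id r).eval t * LinearMap.det (1 + r • A) := by
  obtain ⟨p, hdeg, hp⟩ := exists_polynomial_eval_eq_det_one_add_smul A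
  have hlt : p.degree < s.card :=
    degree_le_natDegree.trans_lt (by exact_mod_cast hdeg.trans_lt hs)
  have hinterp := Lagrange.eq_interpolate (injOn_id (s : Set F)) hlt
  rw [← hp, hinterp, Lagrange.interpolate_apply, eval_finsetSum]
  simp [hp, mul_comm]

end Determinant

theorem eventually_forall_det_one_add_smul_pos {X E : Type*} [TopologicalSpace X]
    [NormedAddCommGroup E] [NormedSpace ℝ E] {s : Set X} (hs : IsCompact s) {B : X → E →L[ℝ] E}
    (hB : Continuous B) : ∀ᶠ t in 𝓝 (0 : ℝ), ∀ x ∈ s, 0 < (1 + t • B x).det := by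
  have hdet : Continuous fun p : ℝ × X => (1 + p.1 • B p.2).det :=
    ContinuousLinearMap.continuous_det.comp (by fun_prop)
  refine hs.eventually_forall_of_forall_eventually fun x _ => ?_
  exact hdet.continuousAt.eventually (lt_mem_nhds (by simp [ContinuousLinearMap.det]))

theorem injOn_of_lipschitzOnWith_sub_id {E : Type*} [NormedAddCommGroup E] {h : E → E}
    {s : Set E} {K : ℝ≥0} (hK : K < 1) (hh : LipschitzOnWith K (fun x => h x - x) s) :
    InjOn h s := by
  intro x hx y hy hxy
  have hdist : dist x y ≤ K * dist x y := by
    simpa only [hxy, dist_sub_left] using hh.dist_le_mul x hx y hy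
  exact dist_le_zero.mp (by nlinarith [dist_nonneg (x := x) (y := y), NNReal.coe_lt_one.2 hK])

section Cube

variable {ι : Type*}

/-- A self-map of the cube `[0,1]^ι` sending each of its faces into itself. The map is total on
`ι → ℝ`, so that it can be differentiated, but only its values on `Icc 0 1` are constrained. -/
structure FacePreserving (f : (ι → ℝ) → ι → ℝ) : Prop where
  mapsTo : MapsTo f (Icc 0 1) (Icc 0 1)
  apply_eq_zero : ∀ x ∈ Icc (0 : ι → ℝ) 1, ∀ i, x i = 0 → f x i = 0
  apply_eq_one : ∀ x ∈ Icc (0 : ι → ℝ) 1, ∀ i, x i = 1 → f x i = 1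

/-- The coordinatewise retraction of `ι → ℝ` onto the cube `[0,1]^ι`. -/
noncomputable def cubeRetraction (x : ι → ℝ) (i : ι) : unitInterval :=
  projIcc 0 1 zero_le_one (x i)

theorem continuous_cubeRetraction : Continuous (cubeRetraction (ι := ι)) :=
  continuous_pi fun i => continuous_projIcc.comp (continuous_apply i)

theorem cubeRetraction_apply_of_le_zero {x : ι → ℝ} {i : ι} (hi : x i ≤ 0) :
    cubeRetraction x i = 0 :=
  projIcc_of_le_left zero_le_one hi

theorem cubeRetraction_apply_of_one_le {x : ι → ℝ} {i : ι} (hi : 1 ≤ x i) :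
    cubeRetraction x i = 1 :=
  projIcc_of_right_le zero_le_one hi

theorem lipschitzWith_cubeRetraction [Fintype ι] :
    LipschitzWith 1 fun (x : ι → ℝ) i => (cubeRetraction x i : ℝ) := by
  refine LipschitzWith.of_dist_le_mul fun x y => (dist_pi_le_iff (by positivity)).2 fun i => ?_
  simpa [cubeRetraction, Real.dist_eq] using
    (abs_projIcc_sub_projIcc zero_le_one).trans (dist_le_pi_dist x y i)

theorem cubeRetraction_mem_Icc (x : ι → ℝ) : (fun i => (cubeRetraction x i : ℝ)) ∈ Icc 0 1 :=
  ⟨fun i => (cubeRetraction x i).2.1, fun i => (cubeRetraction x i).2.2⟩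

namespace FacePreserving

variable {f : (ι → ℝ) → ι → ℝ}

theorem add_smul_sub (hf : FacePreserving f) {t : ℝ} (ht : t ∈ Icc (0 : ℝ) 1) :
    FacePreserving fun x => x + t • (f x - x) where
  mapsTo _ hx := (convex_Icc 0 1).add_smul_sub_mem hx (hf.mapsTo hx) ht
  apply_eq_zero x hx i hi := by simp [hi, hf.apply_eq_zero x hx i hi]
  apply_eq_one x hx i hi := by simp [hi, hf.apply_eq_one x hx i hi]

theorem eq_of_eq_cubeRetraction (hf : FacePreserving f) {x y : ι → ℝ} (hx : x ∈ Icc 0 1)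
    (hy : y ∈ Icc 0 1) (hfix : x = fun i => (cubeRetraction (y - (f x - x)) i : ℝ)) :
    f x = y := by
  ext i
  have hi : x i = max 0 (min 1 (y i - (f x i - x i))) := by
    simpa only [cubeRetraction, coe_projIcc, Pi.sub_apply] using congrFun hfix i
  have hy0 : 0 ≤ y i := hy.1 i
  have hy1 : y i ≤ 1 := hy.2 i
  have h0 := hf.apply_eq_zero x hx i
  have h1 := hf.apply_eq_one x hx i
  -- If the value is truncated in coordinate `i`, then `x` lies on a face and `f x i = x i`, so that
  -- `x i` is the truncation of `y i`, which is `y i` itself.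
  generalize x i = a, y i = b, f x i = c at *
  grind

variable [Fintype ι]

theorem surjOn (hf : FacePreserving f) {K : ℝ≥0} (hK : K < 1)
    (hlip : LipschitzOnWith K (fun x => f x - x) (Icc 0 1)) : SurjOn f (Icc 0 1) (Icc 0 1) := by
  intro y hy
  let Φ : (ι → ℝ) → ι → ℝ := fun x i => cubeRetraction (y - (f x - x)) i
  have hmaps : MapsTo Φ (Icc 0 1) (Icc 0 1) := fun x _ => cubeRetraction_mem_Icc _
  have hcontr : ContractingWith K (hmaps.restrict Φ _ _) := by
    refine ⟨hK, LipschitzWith.of_dist_le_mul fun a b => ?_⟩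
    calc dist (Φ a) (Φ b) ≤ dist (y - (f a - a)) (y - (f b - b)) := by
          simpa using lipschitzWith_cubeRetraction.dist_le_mul (y - (f a - a)) (y - (f b - b))
      _ = dist (f a - a) (f b - b) := dist_sub_left _ _ _
      _ ≤ K * dist a b := hlip.dist_le_mul a a.2 b b.2
  obtain ⟨x, hx, hfix, -⟩ :=
    hcontr.exists_fixedPoint' isClosed_Icc.isComplete hmaps hy (edist_ne_top _ _)
  exact ⟨x, hx, hf.eq_of_eq_cubeRetraction hx hy hfix.symm⟩

theorem setIntegral_abs_det_eq_one (hf : FacePreserving f)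
    {f' : (ι → ℝ) → (ι → ℝ) →L[ℝ] (ι → ℝ)}
    (hf' : ∀ x ∈ Icc 0 1, HasFDerivWithinAt f (f' x) (Icc 0 1) x)
    {K : ℝ≥0} (hK : K < 1) (hlip : LipschitzOnWith K (fun x => f x - x) (Icc 0 1)) :
    ∫ x in Icc (0 : ι → ℝ) 1, |(f' x).det| = 1 := by
  have himage : f '' Icc 0 1 = Icc 0 1 := (hf.surjOn hK hlip).image_eq_of_mapsTo hf.mapsTo
  have hvol := integral_image_eq_integral_abs_det_fderiv_smul volume measurableSet_Icc hf'
    (injOn_of_lipschitzOnWith_sub_id hK hlip) (fun _ => (1 : ℝ))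
  simpa [himage, Real.volume_Icc_pi, measureReal_def] using hvol.symm

theorem eventually_setIntegral_det_eq_one (hf : FacePreserving f) (hsmooth : ContDiff ℝ 1 f) :
    ∀ᶠ t in 𝓝[>] (0 : ℝ), ∫ x in Icc (0 : ι → ℝ) 1, (1 + t • (fderiv ℝ f x - 1)).det = 1 := by
  have hdiff : Differentiable ℝ f := hsmooth.differentiable one_ne_zero
  have hcont : Continuous (fderiv ℝ f) := hsmooth.continuous_fderiv one_ne_zero
  obtain ⟨K, hK⟩ := (hsmooth.sub contDiff_id).contDiffOn.exists_lipschitzOnWith one_ne_zero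
    (convex_Icc (0 : ι → ℝ) 1) isCompact_Icc
  have hpos := eventually_forall_det_one_add_smul_pos (isCompact_Icc (a := (0 : ι → ℝ)) (b := 1))
    (hcont.sub (continuous_const (y := 1)))
  have hsmall : ∀ᶠ t in 𝓝 (0 : ℝ), t < 1 ∧ t * (K : ℝ) < 1 := by
    have hmul : Continuous fun t : ℝ => t * K := by fun_prop
    exact (gt_mem_nhds one_pos).and (hmul.continuousAt.eventually (gt_mem_nhds (by simp)))
  filter_upwards [self_mem_nhdsWithin, nhdsWithin_le_nhds hpos, nhdsWithin_le_nhds hsmall]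
    with t ht0 hdet ⟨ht1, htK⟩
  lift t to ℝ≥0 using le_of_lt ht0
  have hderiv (x : ι → ℝ) : HasFDerivAt (fun y => y + (t : ℝ) • (f y - y))
      (1 + (t : ℝ) • (fderiv ℝ f x - 1)) x :=
    (hasFDerivAt_id x).add
      (((hdiff x).hasFDerivAt.sub (hasFDerivAt_id x)).const_smul (t : ℝ))
  have hlip : LipschitzOnWith (t * K) (fun x => x + (t : ℝ) • (f x - x) - x) (Icc 0 1) := by
    simpa [Function.comp_def] using (lipschitzWith_smul (t : ℝ)).comp_lipschitzOnWith hK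
  rw [← (hf.add_smul_sub ⟨t.2, ht1.le⟩).setIntegral_abs_det_eq_one
    (fun x _ => (hderiv x).hasFDerivWithinAt) (by exact_mod_cast htK) hlip]
  exact setIntegral_congr_fun measurableSet_Icc fun x hx => (abs_of_pos (hdet x hx)).symm

theorem setIntegral_det_fderiv_eq_one (hf : FacePreserving f) (hsmooth : ContDiff ℝ 1 f) :
    ∫ x in Icc (0 : ι → ℝ) 1, (fderiv ℝ f x).det = 1 := by
  have hcont : Continuous (fderiv ℝ f) := hsmooth.continuous_fderiv one_ne_zero
  obtain ⟨ε, hε, hsub⟩ := mem_nhdsGT_iff_exists_Ioo_subset.1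
    (hf.eventually_setIntegral_det_eq_one hsmooth)
  obtain ⟨s, hsε, hcard⟩ := (Ioo_infinite (mem_Ioi.1 hε)).exists_subset_card_eq
    (Fintype.card ι + 1)
  have hs : Module.finrank ℝ (ι → ℝ) < s.card := by simp [hcard]
  have hexpand (x : ι → ℝ) : (fderiv ℝ f x).det = ∑ r ∈ s,
      (Lagrange.basis s id r).eval 1 * (1 + r • (fderiv ℝ f x - 1)).det := by
    simpa using! det_one_add_smul_eq_sum_lagrange_basis hs
      ((fderiv ℝ f x - 1 : (ι → ℝ) →L[ℝ] (ι → ℝ)) : (ι → ℝ) →ₗ[ℝ] (ι → ℝ)) 1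
  calc ∫ x in Icc (0 : ι → ℝ) 1, (fderiv ℝ f x).det
      = ∑ r ∈ s, (Lagrange.basis s id r).eval 1 *
          ∫ x in Icc (0 : ι → ℝ) 1, (1 + r • (fderiv ℝ f x - 1)).det := by
        simp only [hexpand, ← integral_const_mul]
        refine integral_finsetSum s fun r _ => Continuous.integrableOn_Icc ?_
        exact (ContinuousLinearMap.continuous_det.comp
          (continuous_const.add ((hcont.sub continuous_const).const_smul r))).const_mul _
    _ = ∑ r ∈ s, (Lagrange.basis s id r).eval 1 :=
        Finset.sum_congr rfl fun r hr => by rw [hsub (hsε hr), mul_one]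
    _ = 1 := by
        rw [← Polynomial.eval_finsetSum, Lagrange.sum_basis (injOn_id _)
          (Finset.card_pos.1 (by omega)), Polynomial.eval_one]

end FacePreserving

namespace IsPartitionBetween

theorem preimage {X Y : Type*} [TopologicalSpace X] [TopologicalSpace Y] {L A B : Set Y}
    (hL : IsPartitionBetween L A B) {g : X → Y} (hg : Continuous g) :
    IsPartitionBetween (g ⁻¹' L) (g ⁻¹' A) (g ⁻¹' B) := by
  obtain ⟨hclosed, U, V, hU, hV, hUV, hA, hB, hcompl⟩ := hL
  refine ⟨hclosed.preimage hg, g ⁻¹' U, g ⁻¹' V, hU.preimage hg, hV.preimage hg,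
    hUV.preimage g, preimage_mono hA, preimage_mono hB, ?_⟩
  rw [← preimage_compl, hcompl, preimage_union]

theorem mono {X : Type*} [TopologicalSpace X] {L A A' B B' : Set X}
    (hL : IsPartitionBetween L A B) (hA : A' ⊆ A) (hB : B' ⊆ B) : IsPartitionBetween L A' B' := by
  obtain ⟨hclosed, U, V, hU, hV, hUV, hAU, hBV, hcompl⟩ := hL
  exact ⟨hclosed, U, V, hU, hV, hUV, hA.trans hAU, hB.trans hBV, hcompl⟩

theorem exists_isClosed_isClosed_disjoint {X : Type*} [TopologicalSpace X] {L A B C : Set X}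
    (hL : IsPartitionBetween L A B) (hA : IsClosed A) (hB : IsClosed B) (hC : IsClosed C)
    (hCL : Disjoint C L) :
    ∃ P Q : Set X, IsClosed P ∧ IsClosed Q ∧ Disjoint P Q ∧ A ⊆ P ∧ B ⊆ Q ∧ C ⊆ P ∪ Q := by
  obtain ⟨-, U, V, hU, hV, hUV, hAU, hBV, hcompl⟩ := hL
  have hCUV : C ⊆ U ∪ V := hcompl ▸ hCL.subset_compl_right
  refine ⟨A ∪ C \ V, B ∪ C \ U, hA.union (hC.sdiff hV), hB.union (hC.sdiff hU),
    hUV.mono ?_ ?_, subset_union_left, subset_union_left, ?_⟩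
  · exact union_subset hAU (sdiff_subset_iff.2 (union_comm U V ▸ hCUV))
  · exact union_subset hBV (sdiff_subset_iff.2 hCUV)
  · intro x hx
    by_cases hxV : x ∈ V
    · exact .inr (.inr ⟨hx, fun hxU => disjoint_left.1 hUV hxU hxV⟩)
    · exact .inl (.inr ⟨hx, hxV⟩)

theorem exists_contDiff {E : Type*} [NormedAddCommGroup E] [NormedSpace ℝ E]
    [FiniteDimensional ℝ E] {L A B C : Set E} (hL : IsPartitionBetween L A B) (hA : IsClosed A)
    (hB : IsClosed B) (hC : IsClosed C) (hCL : Disjoint C L) :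
    ∃ f : E → ℝ, ContDiff ℝ ∞ f ∧ EqOn f 0 A ∧ EqOn f 1 B ∧ (∀ x, f x ∈ Icc 0 1) ∧
      EqOn (fderiv ℝ f) 0 C := by
  obtain ⟨P, Q, hP, hQ, hPQ, hAP, hBQ, hCPQ⟩ :=
    hL.exists_isClosed_isClosed_disjoint hA hB hC hCL
  obtain ⟨f, hf0, hf1, hfI⟩ := exists_contMDiffMap_zero_one_nhds_of_isClosed (n := ⊤)
    (modelWithCornersSelf ℝ E) hP hQ hPQ
  rw [eventually_nhdsSet_iff_forall] at hf0 hf1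
  refine ⟨f, f.contMDiff.contDiff, fun x hx => (hf0 x (hAP hx)).self_of_nhds,
    fun x hx => (hf1 x (hBQ hx)).self_of_nhds, hfI, fun x hx => ?_⟩
  rcases hCPQ hx with hxP | hxQ
  · simpa using (show f =ᶠ[𝓝 x] fun _ => 0 from hf0 x hxP).fderiv_eq
  · simpa using (show f =ᶠ[𝓝 x] fun _ => 1 from hf1 x hxQ).fderiv_eq

end IsPartitionBetween

theorem det_fderiv_eq_zero_of_fderiv_apply_eq_zero [Finite ι] {f : (ι → ℝ) → ι → ℝ} {x : ι → ℝ}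
    {i : ι} (hf : DifferentiableAt ℝ f x) (hi : fderiv ℝ (fun y => f y i) x = 0) :
    (fderiv ℝ f x).det = 0 := by
  have := Fintype.ofFinite ι
  by_contra hdet
  obtain ⟨v, hv⟩ := (LinearMap.equivOfDetNeZero _ hdet).surjective 1
  have hvi : fderiv ℝ f x v i = 1 := congrFun hv i
  rw [fderiv_apply hf] at hi
  exact zero_ne_one ((DFunLike.congr_fun hi v).symm.trans hvi)

theorem iInter_nonempty_of_isPartitionBetween_halfspaces [Finite ι] {L : ι → Set (ι → ℝ)}
    (hL : ∀ i, IsPartitionBetween (L i) {x | x i ≤ 0} {x | 1 ≤ x i}) : (⋂ i, L i).Nonempty := by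
  have := Fintype.ofFinite ι
  by_contra hempty
  have hcover : ⋃ i, (L i)ᶜ = univ := by
    rw [← compl_iInter, not_nonempty_iff_eq_empty.1 hempty, compl_empty]
  obtain ⟨C, hCcover, hC, hCL⟩ := exists_iUnion_eq_closed_subset
    (fun i => (hL i).1.isOpen_compl) (fun x => toFinite _) hcover
  choose f hsmooth hf0 hf1 hfI hfC using fun i => (hL i).exists_contDiff
    (isClosed_le (continuous_apply i) continuous_const)
    (isClosed_le continuous_const (continuous_apply i)) (hC i) (disjoint_left.2 (hCL i))
  have hface : FacePreserving fun x i => f i x :=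
    { mapsTo := fun x _ => ⟨fun i => (hfI i x).1, fun i => (hfI i x).2⟩
      apply_eq_zero := fun x _ i hi => hf0 i hi.le
      apply_eq_one := fun x _ i hi => hf1 i hi.ge }
  have hF : ContDiff ℝ ∞ fun x i => f i x := contDiff_pi.2 hsmooth
  have hdet (x : ι → ℝ) : (fderiv ℝ (fun x i => f i x) x).det = 0 := by
    obtain ⟨i, hi⟩ := mem_iUnion.1 (hCcover.ge (mem_univ x))
    exact det_fderiv_eq_zero_of_fderiv_apply_eq_zero (hF.differentiable (by simp) x) (hfC i hi)
  simpa [hdet] using hface.setIntegral_det_fderiv_eq_one (hF.of_le (by simp))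

end Cube

/-- The pairs of opposite faces of a Tychonoff cube form an essential family. -/
theorem tychonoff_cube_faces_essential
    (κ : Type*) (L : κ → Set (κ → unitInterval))
    (hL : ∀ α, IsPartitionBetween (L α) {x | x α = 0} {x | x α = 1}) :
    (⋂ α, L α).Nonempty := by
  classical
  refine CompactSpace.iInter_nonempty (fun α => (hL α).1) fun s => ?_
  let extend (x : s → ℝ) : κ → unitInterval :=
    cubeRetraction fun α => if h : α ∈ s then x ⟨α, h⟩ else 0
  have hextend : Continuous extend :=
    continuous_cubeRetraction.comp (continuous_pi fun α => by split_ifs <;> fun_prop)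
  have hpartition (α : s) :
      IsPartitionBetween (extend ⁻¹' L α) {x | x α ≤ 0} {x | 1 ≤ x α} :=
    ((hL α).preimage hextend).mono
      (fun x hx => cubeRetraction_apply_of_le_zero (by simpa using hx))
      (fun x hx => cubeRetraction_apply_of_one_le (by simpa using hx))
  obtain ⟨x, hx⟩ := iInter_nonempty_of_isPartitionBetween_halfspaces hpartition
  exact ⟨extend x, by simpa using hx⟩
end

section
/- Let X be a hereditarily indecomposable metrizable continuum possessing an essential family of two pairs of disjoint closed sets, and let μ : C(X) → ℝ be a Whitney map. Then there is s > 0 such that for every r with 0 < r < s, the Whitney level μ⁻¹(r) (with the Vietoris topology) cannot be topologically embedded into the cube [0,1]^n for any natural number n; in particular μ⁻¹(r) is infinite-dimensional. -/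
open Set

/-- The hyperspace `C(X)` of subcontinua of a metric space `X`, with the topology
induced by the Hausdorff metric (which is the Vietoris topology for compact `X`). -/
abbrev SubcontinuaHyp (X : Type*) [MetricSpace X] : Type _ :=
  {C : TopologicalSpace.NonemptyCompacts X // IsConnected (C : Set X)}

/-!
Call the two essential pairs `(A₀, B₀)` and `(A₁, B₁)`. Every subcontinuum meeting both `A₁` and
`B₁` has `μ`-value at least some `s > 0`. For `0 < r < s`, hereditary indecomposability makes the
elements of the Whitney level `Y = μ⁻¹(r)` a continuous decomposition of `X` into nondegenerate
continua, hence gives an open quotient map `q : X → Y` with these continua as fibers.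

If `u` is a Urysohn function for `(A₀, B₀)` and `g` is uniformly close to `u`, then `{g = 1 / 2}` is
a partition between `A₀` and `B₀`, so it contains a continuum joining `A₁` to `B₁`; this continuum
contains a fiber of `q`. Hence no `g` near `u` is nonconstant on every fiber.

Suppose, on the other hand, that `Y` has no essential family of `m` pairs, and let `h` be
nonconstant on the fibers over a compact `N ⊆ Y`. Over each point of `N` at most one parameter
`d : Fin m → ℝ` makes `g + η ∑ⱼ dⱼ hʲ⁺¹` constant on the fiber, as a nonzero polynomial without
constant term is not constant on the infinite set `h(q⁻¹(y))`. Since `Y` has no essential family of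
`m` pairs, a continuous `e : Y → [-1, 1]ᵐ` avoids all these parameters, and with `d = e ∘ q` the
perturbed function is nonconstant on the fibers over `N`. So these functions form a dense open set,
and as finitely many such `N` cover `Y`, functions nonconstant on every fiber are dense, a
contradiction. Hence `Y` has essential families of every size, whereas by Sard's theorem a closed
subset of `ℝⁿ` has none of more than `n` pairs.
-/

open TopologicalSpace Topology

section EssentialFamilies

variable {X ι : Type*} [TopologicalSpace X]

theorem IsPartitionBetween.setOf_eq {α : Type*} [TopologicalSpace α] [LinearOrder α]
    [OrderClosedTopology α] {A B : Set X} {g : X → α} (hg : Continuous g) {c : α}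
    (hA : ∀ x ∈ A, g x < c) (hB : ∀ x ∈ B, c < g x) :
    IsPartitionBetween {x | g x = c} A B := by
  refine ⟨isClosed_eq hg continuous_const, {x | g x < c}, {x | c < g x},
    isOpen_lt hg continuous_const, isOpen_lt continuous_const hg, ?_, hA, hB, ?_⟩
  · exact disjoint_left.2 fun _ => lt_asymm
  · ext x
    exact ne_iff_lt_or_gt

theorem exists_continuous_abs_eq_one_of_not_isEssentialFamily [NormalSpace X] [Finite ι]
    {A B : ι → Set X} (hA : ∀ i, IsClosed (A i)) (hB : ∀ i, IsClosed (B i))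
    (hAB : ∀ i, Disjoint (A i) (B i)) (h : ¬ IsEssentialFamily A B) :
    ∃ e : C(X, ι → ℝ), (∀ i, ∀ x ∈ A i, e x i = -1) ∧ (∀ i, ∀ x ∈ B i, e x i = 1) ∧
      (∀ x i, |e x i| ≤ 1) ∧ ∀ x, ∃ i, |e x i| = 1 := by
  obtain ⟨L, hL, hL_empty⟩ : ∃ L : ι → Set X,
      (∀ i, IsPartitionBetween (L i) (A i) (B i)) ∧ ⋂ i, L i = ∅ := by
    simpa [IsEssentialFamily, hA, hB, hAB, eq_empty_iff_forall_notMem, Set.Nonempty] using h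
  choose _ U V hU hV hUV hAU hBV hL using hL
  have hcover : ⋃ i, (U i ∪ V i) = univ := by
    simp_rw [← hL, ← compl_iInter, hL_empty, compl_empty]
  obtain ⟨F, hF_univ, hF, hF_sub⟩ := exists_iUnion_eq_closed_subset
    (fun i => (hU i).union (hV i)) (fun _ => toFinite _) hcover
  have hFU (i) : IsClosed (F i ∩ U i) := by
    have : F i ∩ U i = F i \ V i := by
      ext x
      have : x ∈ U i → x ∉ V i := fun h => disjoint_left.1 (hUV i) h
      have : x ∈ F i → x ∈ U i ∪ V i := fun h => hF_sub i h
      grind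
    exact this ▸ (hF i).sdiff (hV i)
  have hFV (i) : IsClosed (F i ∩ V i) := by
    have : F i ∩ V i = F i \ U i := by
      ext x
      have : x ∈ U i → x ∉ V i := fun h => disjoint_left.1 (hUV i) h
      have : x ∈ F i → x ∈ U i ∪ V i := fun h => hF_sub i h
      grind
    exact this ▸ (hF i).sdiff (hU i)
  have hdisj (i) : Disjoint (A i ∪ F i ∩ U i) (B i ∪ F i ∩ V i) :=
    (hUV i).mono (union_subset (hAU i) inter_subset_right)
      (union_subset (hBV i) inter_subset_right)
  choose e he_neg he_pos he_mem using fun i => exists_bounded_mem_Icc_of_closed_of_le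
    ((hA i).union (hFU i)) ((hB i).union (hFV i)) (hdisj i) (by norm_num : (-1 : ℝ) ≤ 1)
  refine ⟨⟨fun x i => e i x, by fun_prop⟩, fun i x hx => he_neg i (.inl hx),
    fun i x hx => he_pos i (.inl hx), fun x i => abs_le.2 (he_mem i x), fun x => ?_⟩
  obtain ⟨i, hi⟩ := iUnion_eq_univ_iff.1 hF_univ x
  refine ⟨i, ?_⟩
  rcases hF_sub i hi with hx | hx
  · simp [he_neg i (.inr ⟨hi, hx⟩)]
  · simp [he_pos i (.inr ⟨hi, hx⟩)]

theorem IsEssentialFamily.card_le_finrank [Fintype ι] {E : Type*} [NormedAddCommGroup E]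
    [NormedSpace ℝ E] [FiniteDimensional ℝ E] {A B : ι → Set X} (hAB : IsEssentialFamily A B)
    {f : X → E} (hf : IsClosedEmbedding f) : Fintype.card ι ≤ Module.finrank ℝ E := by
  obtain ⟨hA, hB, hdisj, hess⟩ := hAB
  by_contra! hlt
  choose G hGA hGB _ using fun i => exists_contMDiffMap_zero_one_of_isClosed (n := 1)
    (modelWithCornersSelf ℝ E) (hf.isClosedMap _ (hA i)) (hf.isClosedMap _ (hB i))
    ((disjoint_image_iff hf.injective).2 (hdisj i))
  have hG : ContDiff ℝ 1 fun z i => G i z := contDiff_pi.2 fun i => (G i).contMDiff.contDiff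
  -- By Sard, some point of the open cube is not a value of `G`.
  obtain ⟨v, hv, hv_range⟩ := (hG.dense_compl_range_of_finrank_lt_finrank
    (by simpa using hlt)).inter_open_nonempty (univ.pi fun _ => Ioo 0 1)
    (isOpen_set_pi finite_univ fun _ _ => isOpen_Ioo)
    (univ_pi_nonempty_iff.2 fun _ => nonempty_Ioo.2 one_pos)
  obtain ⟨x, hx⟩ := hess (fun i => {x | G i (f x) = v i}) fun i =>
    .setOf_eq ((G i).contMDiff.continuous.comp hf.continuous)
      (fun x hx => (hGA i (mem_image_of_mem f hx)).trans_lt (hv i trivial).1)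
      (fun x hx => (hv i trivial).2.trans_eq (hGB i (mem_image_of_mem f hx)).symm)
  exact hv_range ⟨f x, funext (mem_iInter.1 hx)⟩

end EssentialFamilies

section BoundaryBumping

variable {X : Type*} [TopologicalSpace X] [CompactSpace X] [T2Space X] {A B : Set X}

theorem exists_isClopen_of_disjoint_connectedComponent (hA : IsClosed A) (hB : IsClosed B)
    (h : ∀ x ∈ A, Disjoint (connectedComponent x) B) :
    ∃ D : Set X, IsClopen D ∧ A ⊆ D ∧ Disjoint D B := by
  have hmk : Continuous (ConnectedComponents.mk : X → ConnectedComponents X) :=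
    ConnectedComponents.continuous_coe
  obtain ⟨D, hD, hAD, hDB⟩ := exists_clopen_of_closed_subset_open
    (hA.isCompact.image hmk).isClosed (hB.isCompact.image hmk).isClosed.isOpen_compl (by
      rintro _ ⟨x, hx, rfl⟩ ⟨y, hy, hxy⟩
      exact disjoint_left.1 (h x hx) (ConnectedComponents.coe_eq_coe'.1 hxy) hy)
  exact ⟨_, hD.preimage hmk, fun x hx => hAD ⟨x, hx, rfl⟩,
    disjoint_left.2 fun x hx hxB => hDB hx ⟨x, hxB, rfl⟩⟩

theorem exists_isConnected_meeting_or_separation {L : Set X} (hL : IsClosed L)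
    (hA : IsClosed A) (hB : IsClosed B) :
    (∃ K ⊆ L, IsClosed K ∧ IsConnected K ∧ (K ∩ A).Nonempty ∧ (K ∩ B).Nonempty) ∨
      ∃ L₁ L₂ : Set X, IsClosed L₁ ∧ IsClosed L₂ ∧ Disjoint L₁ L₂ ∧ L = L₁ ∪ L₂ ∧
        Disjoint L₂ A ∧ Disjoint L₁ B := by
  refine or_iff_not_imp_left.2 fun h => ?_
  have : CompactSpace L := isCompact_iff_compactSpace.1 hL.isCompact
  obtain ⟨D, hD, hAD, hDB⟩ := exists_isClopen_of_disjoint_connectedComponent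
    (hA.preimage (continuous_subtype_val (p := (· ∈ L))))
    (hB.preimage continuous_subtype_val) fun x hx => disjoint_left.2 fun y hxy hy =>
      h ⟨(↑) '' connectedComponent x, Subtype.coe_image_subset _ _,
        hL.isClosedEmbedding_subtypeVal.isClosedMap _ isClosed_connectedComponent,
        isConnected_connectedComponent.image _ continuous_subtype_val.continuousOn,
        ⟨x, ⟨x, mem_connectedComponent, rfl⟩, hx⟩, ⟨y, ⟨y, hxy, rfl⟩, hy⟩⟩
  refine ⟨(↑) '' D, (↑) '' Dᶜ, hL.isClosedEmbedding_subtypeVal.isClosedMap _ hD.1,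
    hL.isClosedEmbedding_subtypeVal.isClosedMap _ hD.compl.1,
    (disjoint_image_iff Subtype.val_injective).2 disjoint_compl_right, ?_, ?_, ?_⟩
  · rw [← image_union, union_compl_self, image_univ, Subtype.range_coe]
  · rw [disjoint_left]
    rintro _ ⟨x, hx, rfl⟩ hxA
    exact hx (hAD hxA)
  · rw [disjoint_left]
    rintro _ ⟨x, hx, rfl⟩ hxB
    exact disjoint_left.1 hDB hx hxB

theorem exists_isConnected_ssuperset [ConnectedSpace X] {C U : Set X} (hC : IsClosed C)
    (hC_conn : IsConnected C) (hC_ne : C ≠ univ) (hU : IsOpen U) (hCU : C ⊆ U) :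
    ∃ D ⊆ U, IsClosed D ∧ IsConnected D ∧ C ⊂ D := by
  obtain ⟨z, hz⟩ := (ne_univ_iff_exists_notMem C).1 hC_ne
  obtain ⟨W, hW, hCW, hWU⟩ := normal_exists_closure_subset hC
    (hU.inter isOpen_compl_singleton) (subset_inter hCU (subset_compl_singleton_iff.2 hz))
  rcases exists_isConnected_meeting_or_separation isClosed_closure hC hW.isClosed_compl with
    ⟨K, hKW, hK, hK_conn, hKC, w, hwK, hwW⟩ | ⟨L₁, L₂, hL₁, hL₂, hL, hWL, hL₂C, hL₁W⟩
  · refine ⟨K ∪ C, union_subset (fun x hx => (hWU (hKW hx)).1) hCU, hK.union hC,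
      hK_conn.union hKC hC_conn, subset_union_right, fun h => hwW (hCW (h (.inl hwK)))⟩
  · -- `L₁` is a clopen set containing `C` and missing `z`.
    exfalso
    have hL₁_eq : L₁ = W \ L₂ := by
      ext x
      have : x ∈ L₁ → x ∉ L₂ := fun h => disjoint_left.1 hL h
      have : x ∈ L₁ → x ∈ W := fun h => not_not.1 (disjoint_left.1 hL₁W h)
      have : x ∈ W → x ∈ L₁ ∪ L₂ := fun h => hWL ▸ subset_closure h
      grind
    have hL₁_clopen : IsClopen L₁ := ⟨hL₁, hL₁_eq ▸ hW.sdiff hL₂⟩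
    have hL₁_univ : L₁ = univ := by
      obtain ⟨x, hx⟩ := hC_conn.nonempty
      exact hL₁_clopen.eq_univ ⟨x, hL₁_eq ▸ ⟨hCW hx, fun h => disjoint_left.1 hL₂C h hx⟩⟩
    have hzW : z ∈ W \ L₂ := hL₁_eq ▸ hL₁_univ ▸ mem_univ z
    exact (hWU (subset_closure hzW.1)).2 rfl

theorem IsEssentialFamily.exists_isConnected_subset {A B : Fin 2 → Set X}
    (hAB : IsEssentialFamily A B) {L : Set X} (hL : IsPartitionBetween L (A 0) (B 0)) :
    ∃ K ⊆ L, IsClosed K ∧ IsConnected K ∧ (K ∩ A 1).Nonempty ∧ (K ∩ B 1).Nonempty := by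
  obtain ⟨hA, hB, hdisj, hess⟩ := hAB
  refine (exists_isConnected_meeting_or_separation hL.1 (hA 1) (hB 1)).resolve_right ?_
  rintro ⟨L₁, L₂, hL₁, hL₂, hL₁₂, rfl, hL₂A, hL₁B⟩
  obtain ⟨U, V, hU, hV, hAU, hBV, hUV⟩ := normal_separation ((hA 1).union hL₁)
    ((hB 1).union hL₂) (by simp [hdisj 1, hL₁₂, hL₂A.symm, hL₁B])
  have hpart : ∀ i, IsPartitionBetween (![L₁ ∪ L₂, (U ∪ V)ᶜ] i) (A i) (B i) :=
    Fin.forall_fin_two.2 ⟨hL, (hU.union hV).isClosed_compl, U, V, hU, hV, hUV,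
      subset_union_left.trans hAU, subset_union_left.trans hBV, compl_compl _⟩
  obtain ⟨x, hx⟩ := hess _ hpart
  have hxL : x ∈ L₁ ∪ L₂ := mem_iInter.1 hx 0
  have hxUV : x ∈ (U ∪ V)ᶜ := mem_iInter.1 hx 1
  exact hxUV (hxL.imp (fun h => hAU (.inr h)) (fun h => hBV (.inr h)))

end BoundaryBumping

section FiberwiseNonconstant

variable {X Y Z : Type*} [TopologicalSpace X] [TopologicalSpace Y] [TopologicalSpace Z]
  {q : X → Y} {N : Set Y}

/-- The set of continuous maps `X → Z` that are constant on no fiber of `q` over `N`. -/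
def nonconstantOnFibers (Z : Type*) [TopologicalSpace Z] (q : X → Y) (N : Set Y) : Set C(X, Z) :=
  {g | ∀ y ∈ N, (g '' (q ⁻¹' {y})).Nontrivial}

theorem isOpen_setOf_nontrivial_image_fiber [T2Space Z] (hq : IsOpenMap q) {f : X → Z}
    (hf : Continuous f) : IsOpen {y | (f '' (q ⁻¹' {y})).Nontrivial} := by
  rw [isOpen_iff_mem_nhds]
  rintro y ⟨_, ⟨a, ha, rfl⟩, _, ⟨b, hb, rfl⟩, hab⟩
  obtain ⟨U, V, hU, hV, haU, hbV, hUV⟩ := t2_separation hab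
  have hy : y ∈ q '' (f ⁻¹' U) ∩ q '' (f ⁻¹' V) := ⟨⟨a, haU, ha⟩, ⟨b, hbV, hb⟩⟩
  refine Filter.mem_of_superset (((hq _ (hU.preimage hf)).inter
    (hq _ (hV.preimage hf))).mem_nhds hy) ?_
  rintro _ ⟨⟨a', ha'U, rfl⟩, ⟨b', hb'V, hb'⟩⟩
  exact ⟨_, ⟨a', rfl, rfl⟩, _, ⟨b', hb', rfl⟩, hUV.ne_of_mem ha'U hb'V⟩

theorem isOpen_setOf_prod_nontrivial_image_fiber [T2Space Z] [LocallyCompactSpace X]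
    (hq : IsOpenMap q) :
    IsOpen {p : Y × C(X, Z) | (p.2 '' (q ⁻¹' {p.1})).Nontrivial} := by
  have himage (p : Y × C(X, Z)) :
      p.2 '' (q ⁻¹' {p.1}) = (fun p => p.2 p.1) '' (Prod.map q id ⁻¹' {p}) := by
    ext z
    simp [Prod.ext_iff]
  simp_rw [himage]
  exact isOpen_setOf_nontrivial_image_fiber (hq.prodMap IsOpenMap.id) (by fun_prop)

theorem isOpen_nonconstantOnFibers [T2Space Z] [LocallyCompactSpace X] (hq : IsOpenMap q)
    (hN : IsCompact N) : IsOpen (nonconstantOnFibers Z q N) :=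
  isOpen_iff_mem_nhds.2 fun _ hg => hN.eventually_forall_of_forall_eventually fun y hy =>
    ((isOpen_setOf_prod_nontrivial_image_fiber hq).preimage continuous_swap).mem_nhds (hg y hy)

theorem exists_continuous_notMem_of_injOn_fst [NormalSpace Y] [T2Space Y] {ι : Type*} [Fintype ι]
    (hY : ∀ A B : ι → Set Y, ¬ IsEssentialFamily A B) {S : Set (Y × (ι → ℝ))} (hS : IsCompact S)
    (hS_inj : S.InjOn Prod.fst) :
    ∃ e : C(Y, ι → ℝ), (∀ y, ‖e y‖ ≤ 1) ∧ ∀ y, (y, e y) ∉ S := by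
  let slice (c : ℝ) (i : ι) : Set Y := Prod.fst '' (S ∩ {p | p.2 i = c})
  have hslice (c i) : IsClosed (slice c i) :=
    ((hS.inter_right (isClosed_eq (by fun_prop) continuous_const)).image continuous_fst).isClosed
  have hdisj (i) : Disjoint (slice 1 i) (slice (-1) i) := by
    rw [disjoint_left]
    rintro _ ⟨p, ⟨hp, hp_one⟩, rfl⟩ ⟨p', ⟨hp', hp_neg⟩, hpp'⟩
    rw [hS_inj hp' hp hpp', mem_ofPred_eq] at hp_neg
    rw [mem_ofPred_eq] at hp_one
    linarith
  -- `e` is `-1` where the point of `S` has coordinate `1` and vice versa, so when one of its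
  -- coordinates is `±1` it differs from that point.
  obtain ⟨e, he_one, he_neg, he_le, he_abs⟩ :=
    exists_continuous_abs_eq_one_of_not_isEssentialFamily (hslice 1) (hslice (-1)) hdisj (hY _ _)
  refine ⟨e, fun y => (pi_norm_le_iff_of_nonneg zero_le_one).2 (he_le y), fun y hy => ?_⟩
  obtain ⟨i, hi⟩ := he_abs y
  rcases eq_or_eq_neg_of_abs_eq hi with h | h
  · linarith [he_one i y ⟨_, ⟨hy, h⟩, rfl⟩]
  · linarith [he_neg i y ⟨_, ⟨hy, h⟩, rfl⟩]

theorem nontrivial_image_sum_mul_pow {R : Type*} [CommRing R] [IsDomain R] {T : Set R}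
    (hT : T.Infinite) {m : ℕ} {d : Fin m → R} (hd : d ≠ 0) :
    ((fun t => ∑ j, d j * t ^ (j + 1 : ℕ)) '' T).Nontrivial := by
  rw [← not_subsingleton_iff]
  intro hconst
  obtain ⟨t₀, ht₀⟩ := hT.nonempty
  let p : Polynomial R := ∑ j, Polynomial.C (d j) * Polynomial.X ^ (j + 1 : ℕ)
  have hp_eval (t) : p.eval t = ∑ j, d j * t ^ (j + 1 : ℕ) := by
    simp [p, Polynomial.eval_finsetSum]
  have hp_const : p = Polynomial.C (p.eval t₀) := by
    refine Polynomial.eq_of_infinite_eval_eq _ _ (hT.mono fun t ht => ?_)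
    simp only [mem_ofPred_eq, Polynomial.eval_C, hp_eval]
    exact hconst ⟨t, ht, rfl⟩ ⟨t₀, ht₀, rfl⟩
  refine hd (funext fun i => ?_)
  have hcoeff : p.coeff (i + 1) = d i := by
    simp [p, Polynomial.finsetSum_coeff, Polynomial.coeff_X_pow, Fin.val_inj]
  rw [← hcoeff, hp_const, Polynomial.coeff_C_succ, Pi.zero_apply]

variable [CompactSpace X] {m : ℕ}

theorem dense_nonconstantOnFibers_of_linearMap [NormalSpace Y] [T2Space Y] [LocallyCompactSpace X]
    (hq : Continuous q) (hq_open : IsOpenMap q) {ι : Type*} [Finite ι]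
    (hY : ∀ A B : ι → Set Y, ¬ IsEssentialFamily A B) (hN : IsCompact N)
    (L : (ι → ℝ) →L[ℝ] C(X, ℝ)) (hL : ∀ d ≠ 0, L d ∈ nonconstantOnFibers ℝ q N) :
    Dense (nonconstantOnFibers ℝ q N) := by
  have := Fintype.ofFinite ι
  rw [Metric.dense_iff]
  intro g ε hε
  obtain ⟨η, hη, hηL⟩ := exists_pos_mul_lt hε ‖L‖
  let F (d : ι → ℝ) : C(X, ℝ) := g + η • L d
  -- The bad parameters: over each point of `N` there is at most one.
  let S : Set (Y × (ι → ℝ)) :=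
    N ×ˢ Metric.closedBall 0 1 ∩ {p | ¬ (F p.2 '' (q ⁻¹' {p.1})).Nontrivial}
  have hS : IsCompact S := (hN.prod (isCompact_closedBall 0 1)).inter_right
    ((isOpen_setOf_prod_nontrivial_image_fiber hq_open).isClosed_compl.preimage
      (f := fun p : Y × (ι → ℝ) => (p.1, F p.2)) (by fun_prop))
  have hS_inj : S.InjOn Prod.fst := by
    rintro ⟨y, d⟩ ⟨⟨hy, -⟩, hd⟩ ⟨_, d'⟩ ⟨-, hd'⟩ rfl
    by_contra hne
    obtain ⟨_, ⟨a, ha, rfl⟩, _, ⟨b, hb, rfl⟩, hab⟩ :=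
      hL (d - d') (sub_ne_zero.2 fun h => hne (by rw [h])) y hy
    have hFd : F d a = F d b := not_nontrivial_iff.1 hd ⟨a, ha, rfl⟩ ⟨b, hb, rfl⟩
    have hFd' : F d' a = F d' b := not_nontrivial_iff.1 hd' ⟨a, ha, rfl⟩ ⟨b, hb, rfl⟩
    refine hab (mul_left_cancel₀ hη.ne' ?_)
    simp only [F, ContinuousMap.add_apply, ContinuousMap.smul_apply, smul_eq_mul] at hFd hFd'
    simp only [map_sub, ContinuousMap.sub_apply]
    linarith
  obtain ⟨e, he_le, he_notMem⟩ := exists_continuous_notMem_of_injOn_fst hY hS hS_inj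
  let g' : C(X, ℝ) := ⟨fun x => F (e (q x)) x, by fun_prop⟩
  refine ⟨g', ?_, fun y hy => ?_⟩
  · refine (ContinuousMap.dist_lt_iff hε).2 fun x => ?_
    calc dist (g' x) (g x) = η * ‖L (e (q x)) x‖ := by
          simp [g', F, dist_eq_norm, abs_of_pos hη]
      _ ≤ η * ‖L‖ := by
          gcongr
          exact ((L (e (q x))).norm_coe_le_norm x).trans
            (L.unit_le_opNorm _ (he_le (q x)))
      _ < ε := by rwa [mul_comm]
  · by_contra hconst
    refine he_notMem y ⟨⟨hy, mem_closedBall_zero_iff.2 (he_le y)⟩, ?_⟩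
    have himage : g' '' (q ⁻¹' {y}) = F (e y) '' (q ⁻¹' {y}) :=
      image_congr fun x hx => by simp [g', show q x = y from hx]
    rwa [himage] at hconst

theorem dense_nonconstantOnFibers_of_mem [NormalSpace Y] [T2Space Y] [LocallyCompactSpace X]
    (hq : Continuous q) (hq_open : IsOpenMap q)
    (hY : ∀ A B : Fin m → Set Y, ¬ IsEssentialFamily A B) (hN : IsCompact N)
    (hq_conn : ∀ y ∈ N, IsPreconnected (q ⁻¹' {y})) {h : C(X, ℝ)}
    (hh : h ∈ nonconstantOnFibers ℝ q N) :
    Dense (nonconstantOnFibers ℝ q N) := by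
  let L := (Fintype.linearCombination ℝ fun j : Fin m => h ^ (j + 1 : ℕ)).toContinuousLinearMap
  refine dense_nonconstantOnFibers_of_linearMap hq hq_open hY hN L fun d hd y hy => ?_
  have hinf : (h '' (q ⁻¹' {y})).Infinite :=
    ((hq_conn y hy).image h h.continuous.continuousOn).infinite_of_nontrivial (hh y hy)
  convert nontrivial_image_sum_mul_pow hinf hd using 1
  rw [image_image]
  congr! with x
  simp [L, Fintype.linearCombination_apply]

theorem dense_nonconstantOnFibers_univ [T2Space X] [T2Space Y] (hq : IsOpenQuotientMap q)
    (hq_conn : ∀ y, IsPreconnected (q ⁻¹' {y})) (hq_nontrivial : ∀ y, (q ⁻¹' {y}).Nontrivial)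
    (hY : ∀ A B : Fin m → Set Y, ¬ IsEssentialFamily A B) :
    Dense (nonconstantOnFibers ℝ q univ) := by
  have : CompactSpace Y := hq.surjective.compactSpace hq.continuous
  have hlocal (y : Y) : ∃ N ∈ 𝓝 y, IsCompact N ∧ (nonconstantOnFibers ℝ q N).Nonempty := by
    obtain ⟨a, ha, b, hb, hab⟩ := hq_nontrivial y
    obtain ⟨h, ha_zero, hb_one, -⟩ := exists_continuous_zero_one_of_isClosed
      (isClosed_singleton (x := a)) (isClosed_singleton (x := b)) (disjoint_singleton.2 hab)
    have hy : (h '' (q ⁻¹' {y})).Nontrivial :=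
      ⟨_, ⟨a, ha, rfl⟩, _, ⟨b, hb, rfl⟩, by simp [ha_zero rfl, hb_one rfl]⟩
    obtain ⟨N, hN, hN_closed, hN_sub⟩ := exists_mem_nhds_isClosed_subset
      ((isOpen_setOf_nontrivial_image_fiber hq.isOpenMap h.continuous).mem_nhds hy)
    exact ⟨N, hN, hN_closed.isCompact, h, hN_sub⟩
  choose N hN hN_compact h hh using hlocal
  obtain ⟨t, ht⟩ := finite_cover_nhds hN
  have hdense : Dense (⋂₀ ((fun y => nonconstantOnFibers ℝ q (N y)) '' t)) :=
    (t.finite_toSet.image _).dense_sInter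
      (forall_mem_image.2 fun y _ => isOpen_nonconstantOnFibers hq.isOpenMap (hN_compact y))
      (forall_mem_image.2 fun y _ => dense_nonconstantOnFibers_of_mem hq.continuous hq.isOpenMap
        hY (hN_compact y) (fun y _ => hq_conn y) (hh y))
  refine hdense.mono fun g hg y _ => ?_
  obtain ⟨z, hzt, hyz⟩ := mem_iUnion₂.1 (ht ▸ mem_univ y)
  exact hg _ (mem_image_of_mem _ hzt) y hyz

end FiberwiseNonconstant

theorem exists_isOpenQuotientMap_of_existsUnique_mem {X Y : Type*} [TopologicalSpace X] [T2Space X]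
    [TopologicalSpace Y] [CompactSpace Y] {P : Y → NonemptyCompacts X} (hP : Continuous P)
    (hP_unique : ∀ x, ∃! y, x ∈ P y) :
    ∃ q : X → Y, IsOpenQuotientMap q ∧ ∀ y, q ⁻¹' {y} = P y := by
  choose q hq_mem hq_unique using hP_unique
  have hq {x y} : q x = y ↔ x ∈ P y :=
    ⟨fun h => h ▸ hq_mem x, fun h => (hq_unique x y h).symm⟩
  refine ⟨q, ⟨fun y => ?_, ?_, fun U hU => ?_⟩, fun y => ext fun x => hq⟩
  · obtain ⟨x, hx⟩ := (P y).nonempty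
    exact ⟨x, hq.2 hx⟩
  · rw [continuous_iff_isClosed]
    intro F hF
    have hpre : q ⁻¹' F = ⋃ K ∈ P '' F, (K : Set X) := by
      ext x
      simp [← hq]
    exact hpre ▸
      (NonemptyCompacts.isCompact_biUnion_coe_of_isCompact (hF.isCompact.image hP)).isClosed
  · have himage : q '' U = {y | ((P y : Set X) ∩ U).Nonempty} := by
      ext y
      simp only [mem_image, hq, mem_ofPred_eq, Set.Nonempty, mem_inter_iff, SetLike.mem_coe,
        and_comm]
    exact himage ▸ (NonemptyCompacts.isOpen_inter_nonempty_of_isOpen hU).preimage hP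

section Subcontinua

variable {X : Type*}

theorem isClosed_setOf_isConnected_coe [TopologicalSpace X] [T2Space X] [NormalSpace X] :
    IsClosed {C : NonemptyCompacts X | IsConnected (C : Set X)} := by
  rw [← isOpen_compl_iff, isOpen_iff_mem_nhds]
  intro C hC
  have hC' : ¬ IsPreconnected (C : Set X) := fun h => hC ⟨C.nonempty, h⟩
  rw [isPreconnected_iff_subset_of_fully_disjoint_closed C.isCompact.isClosed] at hC'
  push Not at hC'
  obtain ⟨u, v, hu, hv, hCuv, huv, hCu, hCv⟩ := hC'
  obtain ⟨U, V, hU, hV, huU, hvV, hUV⟩ := normal_separation hu hv huv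
  obtain ⟨x, hxC, hxu⟩ := not_subset.1 hCu
  obtain ⟨y, hyC, hyv⟩ := not_subset.1 hCv
  refine Filter.mem_of_superset ((((NonemptyCompacts.isOpen_subsets_of_isOpen (hU.union hV)).inter
    (NonemptyCompacts.isOpen_inter_nonempty_of_isOpen hU)).inter
    (NonemptyCompacts.isOpen_inter_nonempty_of_isOpen hV)).mem_nhds
    ⟨⟨hCuv.trans (union_subset_union huU hvV),
      ⟨y, hyC, huU ((hCuv hyC).resolve_right hyv)⟩⟩,
      ⟨x, hxC, hvV ((hCuv hxC).resolve_left hxu)⟩⟩) ?_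
  rintro K ⟨⟨hKUV, hKU⟩, hKV⟩ hK
  obtain ⟨x, -, hx⟩ := hK.isPreconnected U V hU hV hKUV hKU hKV
  exact disjoint_left.1 hUV hx.1 hx.2

variable [MetricSpace X] {μ : SubcontinuaHyp X → ℝ} {r : ℝ}

theorem HereditarilyIndecomposable.le_or_ge (hX : HereditarilyIndecomposable X)
    {C D : SubcontinuaHyp X} {x : X} (hC : x ∈ C.1) (hD : x ∈ D.1) : C ≤ D ∨ D ≤ C :=
  hX _ _ C.1.isCompact C.2 D.1.isCompact D.2 ⟨x, hC, hD⟩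

/-- The degenerate subcontinuum `{x}`. -/
def SubcontinuaHyp.singleton (x : X) : SubcontinuaHyp X :=
  ⟨{x}, isConnected_singleton⟩

/-- A *Whitney map*, a continuous measure of the size of subcontinua; the order on
`SubcontinuaHyp X` is inclusion. -/
structure IsWhitneyMap (μ : SubcontinuaHyp X → ℝ) : Prop where
  continuous : Continuous μ
  map_singleton : ∀ x, μ (.singleton x) = 0
  strictMono : StrictMono μ

/-- The level `μ⁻¹(r)` as a subspace of the hyperspace of subcontinua. -/
abbrev WhitneyLevel (μ : SubcontinuaHyp X → ℝ) (r : ℝ) : Type _ :=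
  {C : SubcontinuaHyp X // μ C = r}

theorem IsWhitneyMap.pos_iff_nontrivial (hμ : IsWhitneyMap μ) {C : SubcontinuaHyp X} :
    0 < μ C ↔ (C.1 : Set X).Nontrivial := by
  obtain ⟨x, hx⟩ := C.1.nonempty
  have hle : SubcontinuaHyp.singleton x ≤ C := singleton_subset_iff.2 hx
  rw [← hμ.map_singleton x, (hμ.strictMono.monotone hle).lt_iff_ne, ← not_subsingleton_iff,
    subsingleton_iff_singleton hx, Ne, not_iff_not]
  refine ⟨fun h => ?_, fun h => congrArg μ (Subtype.ext (SetLike.coe_injective h.symm))⟩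
  rw [← hle.eq_of_not_lt fun hlt => (hμ.strictMono hlt).ne h]
  rfl

theorem isClosed_Ici_subcontinuum {C : SubcontinuaHyp X} : IsClosed (Ici C) := by
  have hIci : Ici C = ⋂ x ∈ C.1, {D : SubcontinuaHyp X | ((D.1 : Set X) ∩ {x}).Nonempty} := by
    ext D
    simp only [mem_iInter, mem_ofPred_eq, inter_singleton_nonempty, SetLike.mem_coe]
    rfl
  exact hIci ▸ isClosed_biInter fun x _ =>
    (NonemptyCompacts.isClosed_inter_nonempty_of_isClosed isClosed_singleton).preimage
      continuous_subtype_val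

variable [CompactSpace X]

instance : CompactSpace (SubcontinuaHyp X) :=
  isCompact_iff_compactSpace.1 isClosed_setOf_isConnected_coe.isCompact

theorem compactSpace_whitneyLevel (hμ : Continuous μ) : CompactSpace (WhitneyLevel μ r) :=
  isCompact_iff_compactSpace.1 (isClosed_eq hμ continuous_const).isCompact

theorem isCompact_setOf_subcontinuum_inter_nonempty {A : Set X} (hA : IsClosed A) :
    IsCompact {C : SubcontinuaHyp X | ((C.1 : Set X) ∩ A).Nonempty} :=
  ((NonemptyCompacts.isClosed_inter_nonempty_of_isClosed hA).preimage
    continuous_subtype_val).isCompact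

theorem IsWhitneyMap.exists_pos_le_of_inter_nonempty (hμ : IsWhitneyMap μ) {A B : Set X}
    (hA : IsClosed A) (hB : IsClosed B) (hAB : Disjoint A B) :
    ∃ s > 0, ∀ C : SubcontinuaHyp X, ((C.1 : Set X) ∩ A).Nonempty →
      ((C.1 : Set X) ∩ B).Nonempty → s ≤ μ C := by
  have hcompact := (isCompact_setOf_subcontinuum_inter_nonempty hA).inter
    (isCompact_setOf_subcontinuum_inter_nonempty hB)
  obtain ⟨s, hs, hs_le⟩ := hcompact.exists_forall_le' hμ.continuous.continuousOn (a := 0) (by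
    rintro C ⟨⟨a, haC, haA⟩, ⟨b, hbC, hbB⟩⟩
    exact hμ.pos_iff_nontrivial.2 ⟨a, haC, b, hbC, hAB.ne_of_mem haA hbB⟩)
  exact ⟨s, hs, fun C hCA hCB => hs_le C ⟨hCA, hCB⟩⟩

theorem IsEssentialFamily.exists_subcontinuum_eq {A B : Fin 2 → Set X}
    (hAB : IsEssentialFamily A B) {g : C(X, ℝ)} {c : ℝ} (hA : ∀ x ∈ A 0, g x < c)
    (hB : ∀ x ∈ B 0, c < g x) :
    ∃ K : SubcontinuaHyp X, ((K.1 : Set X) ∩ A 1).Nonempty ∧ ((K.1 : Set X) ∩ B 1).Nonempty ∧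
      ∀ x ∈ K.1, g x = c := by
  obtain ⟨K, hK_sub, hK, hK_conn, hKA, hKB⟩ :=
    hAB.exists_isConnected_subset (.setOf_eq g.continuous hA hB)
  exact ⟨⟨⟨⟨K, hK.isCompact⟩, hK_conn.nonempty⟩, hK_conn⟩, hKA, hKB, fun x hx => hK_sub hx⟩

variable [ConnectedSpace X]

theorem nhdsGT_subcontinuum_neBot {C : SubcontinuaHyp X} (hC : (C.1 : Set X) ≠ univ) :
    (𝓝[>] C).NeBot := by
  rw [← mem_closure_iff_nhdsWithin_neBot, Metric.mem_closure_iff]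
  intro ε hε
  obtain ⟨D, hDε, hD, hD_conn, hCD⟩ := exists_isConnected_ssuperset C.1.isCompact.isClosed C.2 hC
    Metric.isOpen_thickening (Metric.self_subset_thickening (half_pos hε) (C.1 : Set X))
  refine ⟨⟨⟨⟨D, hD.isCompact⟩, hD_conn.nonempty⟩, hD_conn⟩, hCD, ?_⟩
  refine lt_of_le_of_lt ?_ (half_lt_self hε)
  rw [Subtype.dist_eq, Metric.NonemptyCompacts.dist_eq]
  refine Metric.hausdorffDist_le_of_mem_dist (half_pos hε).le
    (fun x hx => ⟨x, hCD.1 hx, by simpa using (half_pos hε).le⟩) fun x hx => ?_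
  obtain ⟨y, hy, hxy⟩ := Metric.mem_thickening_iff.1 (hDε hx)
  exact ⟨y, hy, hxy.le⟩

theorem exists_subcontinuum_ge_apply_eq (hμ : Continuous μ) (hμ_mono : StrictMono μ)
    {C K : SubcontinuaHyp X} (hC : μ C ≤ r) (hK : r ≤ μ K) : ∃ D, C ≤ D ∧ μ D = r := by
  have hS : IsCompact (Ici C ∩ {D | μ D ≤ r}) :=
    (isClosed_Ici_subcontinuum.inter (isClosed_le hμ continuous_const)).isCompact
  obtain ⟨D, ⟨hCD, hDr⟩, hD_max⟩ := hS.exists_isMaxOn ⟨C, self_mem_Ici, hC⟩ hμ.continuousOn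
  refine ⟨D, hCD, hDr.eq_of_not_lt fun hlt => ?_⟩
  have hD : (D.1 : Set X) ≠ univ := fun h =>
    have hKD : K ≤ D := show (K.1 : Set X) ⊆ D.1 by simp [h]
    (hK.trans (hμ_mono.monotone hKD)).not_gt hlt
  have := nhdsGT_subcontinuum_neBot hD
  have hev : ∀ᶠ D' in 𝓝[>] D, μ D' < r :=
    (hμ.continuousAt.eventually_lt_const hlt).filter_mono nhdsWithin_le_nhds
  obtain ⟨D', hD'r, hDD'⟩ := (hev.and self_mem_nhdsWithin).exists
  exact (hD_max ⟨hCD.trans (le_of_lt hDD'), hD'r.le⟩).not_gt (hμ_mono hDD')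

theorem IsWhitneyMap.existsUnique_mem_whitneyLevel (hμ : IsWhitneyMap μ)
    (hX : HereditarilyIndecomposable X) (hr : 0 ≤ r) {K : SubcontinuaHyp X} (hK : r ≤ μ K) (x : X) :
    ∃! C : WhitneyLevel μ r, x ∈ C.1.1 := by
  obtain ⟨C, hxC, hCr⟩ := exists_subcontinuum_ge_apply_eq hμ.continuous hμ.strictMono
    ((hμ.map_singleton x).trans_le hr) hK
  have hxC : x ∈ C.1 := singleton_subset_iff.1 hxC
  refine ⟨⟨C, hCr⟩, hxC, fun D hxD => Subtype.ext ?_⟩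
  by_contra hne
  rcases hX.le_or_ge hxC hxD with h | h
  · exact (hμ.strictMono (h.lt_of_ne' hne)).ne (hCr.trans D.2.symm)
  · exact (hμ.strictMono (h.lt_of_ne hne)).ne (D.2.trans hCr.symm)

theorem IsWhitneyMap.exists_isEssentialFamily_whitneyLevel (hμ : IsWhitneyMap μ)
    (hX : HereditarilyIndecomposable X) {A B : Fin 2 → Set X} (hAB : IsEssentialFamily A B)
    (hr : 0 < r) (hr_lt : ∀ C : SubcontinuaHyp X, ((C.1 : Set X) ∩ A 1).Nonempty →
      ((C.1 : Set X) ∩ B 1).Nonempty → r < μ C) (m : ℕ) :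
    ∃ A' B' : Fin m → Set (WhitneyLevel μ r), IsEssentialFamily A' B' := by
  by_contra! hY
  have : CompactSpace (WhitneyLevel μ r) := compactSpace_whitneyLevel hμ.continuous
  obtain ⟨u, huA, huB, -⟩ := exists_continuous_zero_one_of_isClosed (hAB.1 0) (hAB.2.1 0)
    (hAB.2.2.1 0)
  have hnear {g : C(X, ℝ)} (hg : dist u g < 1 / 2) : ∃ K : SubcontinuaHyp X,
      r < μ K ∧ ∀ x ∈ K.1, g x = 1 / 2 := by
    have hdist (x) := abs_lt.1 ((ContinuousMap.dist_apply_le_dist x).trans_lt hg)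
    obtain ⟨K, hKA, hKB, hgK⟩ := hAB.exists_subcontinuum_eq (g := g) (c := 1 / 2)
      (fun x hx => by have : u x = 0 := huA hx; linarith [(hdist x).1])
      (fun x hx => by have : u x = 1 := huB hx; linarith [(hdist x).2])
    exact ⟨K, hr_lt K hKA hKB, hgK⟩
  obtain ⟨K₀, hK₀, -⟩ := hnear (g := u) (by simp)
  obtain ⟨q, hq, hq_fiber⟩ := exists_isOpenQuotientMap_of_existsUnique_mem
    (P := fun C : WhitneyLevel μ r => C.1.1) (by fun_prop)
    (hμ.existsUnique_mem_whitneyLevel hX hr.le hK₀.le)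
  obtain ⟨g, hg, hug⟩ := (dense_nonconstantOnFibers_univ hq
    (fun C => hq_fiber C ▸ C.1.2.isPreconnected)
    (fun C => hq_fiber C ▸ hμ.pos_iff_nontrivial.1 (hr.trans_eq C.2.symm)) hY).exists_dist_lt u
      (half_pos one_pos)
  obtain ⟨K, hK, hgK⟩ := hnear hug
  obtain ⟨x, hxK⟩ := K.1.nonempty
  have hxC : x ∈ (q x).1.1 := by
    rw [← SetLike.mem_coe, ← hq_fiber]
    rfl
  have hCK : (q x).1 ≤ K := (hX.le_or_ge hxC hxK).resolve_right fun h =>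
    (hμ.strictMono.monotone h).not_gt ((q x).2.trans_lt hK)
  obtain ⟨_, ⟨a, ha, rfl⟩, _, ⟨b, hb, rfl⟩, hab⟩ := hg (q x) trivial
  rw [hq_fiber] at ha hb
  exact hab ((hgK a (hCK ha)).trans (hgK b (hCK hb)).symm)

end Subcontinua

/-- Kelley: in an at least two-dimensional hereditarily indecomposable metric continuum,
all sufficiently low Whitney levels embed in no finite-dimensional cube; in particular
they are infinite-dimensional. -/
theorem small_whitney_levels_infinite_dimensional
    (X : Type*) [MetricSpace X] [CompactSpace X] [ConnectedSpace X]
    (hX : HereditarilyIndecomposable X)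
    (A B : Fin 2 → Set X) (hAB : IsEssentialFamily A B)
    (μ : SubcontinuaHyp X → ℝ) (hμcont : Continuous μ)
    (hμ0 : ∀ (C : SubcontinuaHyp X) (x : X), (C.1 : Set X) = {x} → μ C = 0)
    (hμmono : ∀ C D : SubcontinuaHyp X, (C.1 : Set X) ⊂ (D.1 : Set X) → μ C < μ D) :
    ∃ s : ℝ, 0 < s ∧ ∀ r : ℝ, 0 < r → r < s →
      (∀ n : ℕ, ¬ ∃ f : {C : SubcontinuaHyp X // μ C = r} → (Fin n → unitInterval),
        Topology.IsEmbedding f) ∧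
      (∀ m : ℕ, ∃ A' B' : Fin m → Set {C : SubcontinuaHyp X // μ C = r},
        IsEssentialFamily A' B') := by
  have hμ : IsWhitneyMap μ := ⟨hμcont, fun x => hμ0 _ x rfl, fun C D h => hμmono C D h⟩
  obtain ⟨s, hs, hs_le⟩ :=
    hμ.exists_pos_le_of_inter_nonempty (hAB.1 1) (hAB.2.1 1) (hAB.2.2.1 1)
  refine ⟨s, hs, fun r hr hrs => ?_⟩
  have hess := hμ.exists_isEssentialFamily_whitneyLevel hX hAB hr
    fun C hCA hCB => hrs.trans_le (hs_le C hCA hCB)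
  refine ⟨?_, hess⟩
  rintro n ⟨f, hf⟩
  have : CompactSpace (WhitneyLevel μ r) := compactSpace_whitneyLevel hμcont
  have hf_val : IsClosedEmbedding fun C i => (f C i : ℝ) := by
    refine Continuous.isClosedEmbedding ?_ fun C D h => ?_
    · have := hf.continuous
      fun_prop
    · exact hf.injective (funext fun i => Subtype.ext (congrFun h i))
  obtain ⟨A', B', hAB'⟩ := hess (n + 1)
  simpa using hAB'.card_le_finrank hf_val
end
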